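/- There exist constants ν₀ ∈ (0,1], C₁ > 0, C₂ ∈ (C₁ν₀, 1) and c, C > 0, depending only on f and D, such that for every ν ∈ (0,ν₀] and every ℓ in the inertial range J₂ = (C₁ν, C₂], the flatness F(ℓ) = S₄(ℓ)/S₂(ℓ)² satisfies c ℓ⁻¹ ≤ F(ℓ) ≤ C ℓ⁻¹. -/

import Mathlib

open MeasureTheory Set
open scoped ENNReal

/-- The `L^p` norm (on the circle, i.e. over one period `(0,1]`) of the `m`-th
derivative of a function `v : ℝ → ℝ` (identified with a function on `S¹ = ℝ/ℤ`). -/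
noncomputable def sobLp (m : ℕ) (p : ℝ≥0∞) (v : ℝ → ℝ) : ℝ :=
  (eLpNorm (iteratedDeriv m v) p (volume.restrict (Ioc (0:ℝ) 1))).toReal

/-- `u` is a smooth, space-periodic, zero-mean-value solution of the generalised
Burgers equation `u_t + f'(u) u_x - ν u_xx = 0` with strongly convex `f` and
nonzero initial condition. -/
structure IsBurgersSolution (f : ℝ → ℝ) (σ ν : ℝ) (u : ℝ → ℝ → ℝ) : Prop where
  hf : ContDiff ℝ (⊤ : ℕ∞) f
  hσ : 0 < σ
  hconv : ∀ y, σ ≤ iteratedDeriv 2 f y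
  hν : 0 < ν
  hu : ContDiffOn ℝ (⊤ : ℕ∞) (Function.uncurry u) (Ici (0:ℝ) ×ˢ univ)
  hper : ∀ t x, u t (x + 1) = u t x
  hpde : ∀ t, 0 < t → ∀ x,
    deriv (fun s => u s x) t + deriv f (u t x) * deriv (u t) x
      - ν * deriv (deriv (u t)) x = 0
  hmean : ∀ t, 0 ≤ t → ∫ x in Ioc (0:ℝ) 1, u t x = 0
  hinit : ∃ x, u 0 x ≠ 0

/-- The quantity `D = max(|u₀|₁⁻¹, |u₀|_{1,∞})`. -/
noncomputable def burgersD (u : ℝ → ℝ → ℝ) : ℝ :=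
  max (sobLp 0 1 (u 0))⁻¹ (sobLp 1 ⊤ (u 0))

/-- `T₁ = D⁻² C̃⁻¹ / 4`. -/
noncomputable def burgersT₁ (D Ct : ℝ) : ℝ := (D ^ 2)⁻¹ * Ct⁻¹ / 4

/-- `T₂ = max(3T₁/2, 2Dσ⁻¹)`. -/
noncomputable def burgersT₂ (σ D Ct : ℝ) : ℝ :=
  max (3 / 2 * burgersT₁ D Ct) (2 * D * σ⁻¹)

/-- Time average over `[T₁, T₂]`. -/
noncomputable def timeAvg (T₁ T₂ : ℝ) (A : ℝ → ℝ) : ℝ :=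
  (T₂ - T₁)⁻¹ * ∫ t in T₁..T₂, A t

/-- The structure function `S_p(ℓ)`. -/
noncomputable def structFun (T₁ T₂ : ℝ) (u : ℝ → ℝ → ℝ) (p ℓ : ℝ) : ℝ :=
  timeAvg T₁ T₂ (fun t => ∫ x in Ioc (0:ℝ) 1, |u t (x + ℓ) - u t x| ^ p)

/-!
Write the equation as `u_t = q_x` with `q = ν u_x - f(u)`, and let `C(t, ℓ)` be the correlation
`∫ u(t, x) u(t, x + r) dx` integrated over `0 ≤ r ≤ ℓ`. The maximum principle for `u_x` gives
Oleinik's bound `u_x ≤ min (D, 1 / (σ t))`. This one-sided bound, together with the zero mean of `u`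
and of its increments, controls `|u|`, `∫ |u_x|` and all moments of increments: `S_p(ℓ) ≲ ℓ` for
`p ≥ 1`, and `C(t, ℓ) = ℓ ∫ u² dx + O(ℓ²)`.

In `∂C/∂t` the contribution of `f` is, after subtracting integrals that vanish by periodicity, the
error of the trapezoidal rule for `f` between `u(t, x)` and `u(t, x + ℓ)`. Hence it is quadratic in
the increments and `|∂C/∂t| ≲ S₂(ℓ) + ν` on average in time. On the other hand the energy drops by
an amount of order `D⁻²` between `T₁`, before which at most half of it can be dissipated, and `T₂`,
when Oleinik's bound makes `|u|` small. So `ℓ ≲ S₂(ℓ) + ν + ℓ²`, that is, `S₂(ℓ) ≳ ℓ` in the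
inertial range. Interpolating `S₂` between `S₁ ≲ ℓ` and `S_p` yields `S_p(ℓ) ≳ ℓ` for every `p ≥ 2`,
and the flatness is a quotient of two such quantities.
-/

open Function Filter Topology

section OneVariable

theorem deriv_deriv_nonpos_of_isLocalMax {g : ℝ → ℝ} {x : ℝ} (hg : ContinuousAt g x)
    (hmax : IsLocalMax g x) : deriv (deriv g) x ≤ 0 := by
  by_contra! hpos
  -- Otherwise `x` is also a local minimum, so `g` is locally constant and `g'' x = 0`.
  have hmin := isLocalMin_of_deriv_deriv_pos hpos hmax.deriv_eq_zero hg
  have hconst : g =ᶠ[𝓝 x] fun _ => g x := by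
    filter_upwards [hmax, hmin] with y hle hge using le_antisymm hle hge
  have hzero : deriv (deriv g) x = 0 := by simpa using hconst.deriv.deriv_eq
  exact hpos.ne' hzero

theorem deriv_nonneg_of_isMaxOn_Icc_right {g : ℝ → ℝ} {a b g' : ℝ} (hab : a < b)
    (hg : HasDerivWithinAt g g' (Icc a b) b) (hmax : IsMaxOn g (Icc a b) b) : 0 ≤ g' := by
  have hcone : a - b ∈ posTangentConeAt (Icc a b) b :=
    sub_mem_posTangentConeAt_of_segment_subset (by rw [segment_symm, segment_eq_Icc hab.le])
  have hle : (a - b) * g' ≤ 0 := by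
    simpa using hmax.localize.hasFDerivWithinAt_nonpos hg.hasFDerivWithinAt hcone
  exact nonneg_of_mul_nonpos_right hle (sub_neg.2 hab)

end OneVariable

section PartialDerivatives

variable {E : Type*} [NormedAddCommGroup E] [NormedSpace ℝ E] {w : ℝ → ℝ → E} {s : Set ℝ}
  {t x : ℝ}

theorem hasDerivAt_right_of_hasFDerivWithinAt_uncurry {w' : ℝ × ℝ →L[ℝ] E} (ht : t ∈ s)
    (hw : HasFDerivWithinAt (uncurry w) w' (s ×ˢ univ) (t, x)) :
    HasDerivAt (w t) (w' (0, 1)) x := by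
  have hline : HasDerivWithinAt (fun y : ℝ => (t, y)) (0, 1) univ x :=
    ((hasDerivAt_const x t).prodMk (hasDerivAt_id x)).hasDerivWithinAt
  have hmaps : MapsTo (fun y : ℝ => (t, y)) univ (s ×ˢ univ) := fun y hy => ⟨ht, hy⟩
  exact hasDerivWithinAt_univ.1 (hw.comp_hasDerivWithinAt x hline hmaps)

theorem hasDerivWithinAt_left_of_hasFDerivWithinAt_uncurry {w' : ℝ × ℝ →L[ℝ] E}
    (hw : HasFDerivWithinAt (uncurry w) w' (s ×ˢ univ) (t, x)) :
    HasDerivWithinAt (fun τ => w τ x) (w' (1, 0)) s t := by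
  have hline : HasDerivWithinAt (fun τ : ℝ => (τ, x)) (1, 0) s t :=
    ((hasDerivAt_id t).prodMk (hasDerivAt_const t x)).hasDerivWithinAt
  have hmaps : MapsTo (fun τ : ℝ => (τ, x)) s (s ×ˢ univ) := fun τ hτ => ⟨hτ, mem_univ x⟩
  exact hw.comp_hasDerivWithinAt t hline hmaps

theorem contDiffOn_uncurry_deriv_right {m n : WithTop ℕ∞} (hs : UniqueDiffOn ℝ s)
    (hw : ContDiffOn ℝ n (uncurry w) (s ×ˢ univ)) (hmn : m + 1 ≤ n) :
    ContDiffOn ℝ m (uncurry fun t x => deriv (w t) x) (s ×ˢ univ) := by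
  have hdiff := hw.differentiableOn (ne_bot_of_le_ne_bot (by simp) hmn)
  refine ((hw.fderivWithin (hs.prod uniqueDiffOn_univ) hmn).clm_apply
    (contDiffOn_const (c := ((0, 1) : ℝ × ℝ)))).congr ?_
  rintro ⟨t, x⟩ htx
  exact (hasDerivAt_right_of_hasFDerivWithinAt_uncurry htx.1
    (hdiff _ htx).hasFDerivWithinAt).deriv

theorem contDiffOn_uncurry_deriv_left {m n : WithTop ℕ∞} (hs : IsOpen s)
    (hw : ContDiffOn ℝ n (uncurry w) (s ×ˢ univ)) (hmn : m + 1 ≤ n) :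
    ContDiffOn ℝ m (uncurry fun t x => deriv (fun τ => w τ x) t) (s ×ˢ univ) := by
  have hdiff := hw.differentiableOn (ne_bot_of_le_ne_bot (by simp) hmn)
  refine ((hw.fderivWithin (hs.uniqueDiffOn.prod uniqueDiffOn_univ) hmn).clm_apply
    (contDiffOn_const (c := ((1, 0) : ℝ × ℝ)))).congr ?_
  rintro ⟨t, x⟩ htx
  exact ((hasDerivWithinAt_left_of_hasFDerivWithinAt_uncurry
    (hdiff _ htx).hasFDerivWithinAt).hasDerivAt (hs.mem_nhds htx.1)).deriv

theorem hasDerivAt_right_of_hasFDerivAt_uncurry {w' : ℝ × ℝ →L[ℝ] E}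
    (hw : HasFDerivAt (uncurry w) w' (t, x)) : HasDerivAt (w t) (w' (0, 1)) x :=
  hasDerivAt_right_of_hasFDerivWithinAt_uncurry (mem_univ t) hw.hasFDerivWithinAt

theorem hasDerivAt_left_of_hasFDerivAt_uncurry {w' : ℝ × ℝ →L[ℝ] E}
    (hw : HasFDerivAt (uncurry w) w' (t, x)) : HasDerivAt (fun τ => w τ x) (w' (1, 0)) t :=
  hasDerivWithinAt_univ.1 (hasDerivWithinAt_left_of_hasFDerivWithinAt_uncurry (s := univ)
    hw.hasFDerivWithinAt)

theorem hasDerivAt_deriv_left_of_differentiableOn_uncurry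
    (hw : DifferentiableOn ℝ (uncurry w) (s ×ˢ univ)) (hs : s ∈ 𝓝 t) (x : ℝ) :
    HasDerivAt (fun τ => w τ x) (deriv (fun τ => w τ x) t) t :=
  ((hasDerivWithinAt_left_of_hasFDerivWithinAt_uncurry
    (hw (t, x) ⟨mem_of_mem_nhds hs, mem_univ x⟩).hasFDerivWithinAt).hasDerivAt
      hs).differentiableAt.hasDerivAt

theorem deriv_deriv_comm (hw : ContDiffAt ℝ 2 (uncurry w) (t, x)) :
    deriv (fun τ => deriv (w τ) x) t = deriv (fun y => deriv (fun τ => w τ y) t) x := by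
  have hsymm : IsSymmSndFDerivAt ℝ (uncurry w) (t, x) := hw.isSymmSndFDerivAt (by simp)
  have hfderiv : ∀ᶠ p in 𝓝 (t, x), HasFDerivAt (uncurry w) (fderiv ℝ (uncurry w) p) p := by
    filter_upwards [hw.eventually (by simp)] with p hp
    exact (hp.differentiableAt (by simp)).hasFDerivAt
  have hsnd : HasFDerivAt (uncurry fun τ y => fderiv ℝ (uncurry w) (τ, y))
      (fderiv ℝ (fderiv ℝ (uncurry w)) (t, x)) (t, x) :=
    ((hw.fderiv_right (m := 1) (by norm_num)).differentiableAt (by simp)).hasFDerivAt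
  have hright : (fun τ => deriv (w τ) x) =ᶠ[𝓝 t] fun τ => fderiv ℝ (uncurry w) (τ, x) (0, 1) := by
    filter_upwards [(Continuous.prodMk_left x).continuousAt.eventually hfderiv] with τ hτ
    exact (hasDerivAt_right_of_hasFDerivAt_uncurry hτ).deriv
  have hleft : (fun y => deriv (fun τ => w τ y) t)
      =ᶠ[𝓝 x] fun y => fderiv ℝ (uncurry w) (t, y) (1, 0) := by
    filter_upwards [(Continuous.prodMk_right t).continuousAt.eventually hfderiv] with y hy
    exact (hasDerivAt_left_of_hasFDerivAt_uncurry hy).deriv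
  rw [hright.deriv_eq, hleft.deriv_eq,
    ((hasDerivAt_left_of_hasFDerivAt_uncurry hsnd).clm_apply (hasDerivAt_const t (0, 1))).deriv,
    ((hasDerivAt_right_of_hasFDerivAt_uncurry hsnd).clm_apply (hasDerivAt_const x (1, 0))).deriv]
  simpa using hsymm (1, 0) (0, 1)

end PartialDerivatives

section IntervalIntegrals

variable {a b : ℝ}

theorem integral_abs_le_of_integral_eq_zero {φ : ℝ → ℝ} {B : ℝ} (hab : a ≤ b)
    (hφ : IntervalIntegrable φ volume a b) (hB : 0 ≤ B) (hle : ∀ x ∈ Icc a b, φ x ≤ B)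
    (hzero : ∫ x in a..b, φ x = 0) : ∫ x in a..b, |φ x| ≤ 2 * B * (b - a) :=
  calc ∫ x in a..b, |φ x|
      ≤ ∫ x in a..b, (2 * B - φ x) := by
        refine intervalIntegral.integral_mono_on hab hφ.abs (intervalIntegrable_const.sub hφ)
          fun x hx => abs_le.2 ⟨?_, ?_⟩ <;> linarith [hle x hx]
    _ = 2 * B * (b - a) := by
        rw [intervalIntegral.integral_sub intervalIntegrable_const hφ, hzero,
          intervalIntegral.integral_const, smul_eq_mul, sub_zero, mul_comm]

theorem abs_integral_mul_le {φ ψ : ℝ → ℝ} {A : ℝ} (hab : a ≤ b)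
    (hψ : IntervalIntegrable ψ volume a b) (hA : ∀ x, |φ x| ≤ A) :
    |∫ x in a..b, φ x * ψ x| ≤ A * ∫ x in a..b, |ψ x| := by
  rw [← intervalIntegral.integral_const_mul, ← Real.norm_eq_abs]
  refine intervalIntegral.norm_integral_le_of_norm_le hab (.of_forall fun x _ => ?_)
    (hψ.abs.const_mul A)
  rw [Real.norm_eq_abs, abs_mul]
  exact mul_le_mul_of_nonneg_right (hA x) (abs_nonneg _)

variable {E : Type*} [NormedAddCommGroup E] [NormedSpace ℝ E]

theorem hasDerivAt_intervalIntegral_of_continuousOn {F F' : ℝ → ℝ → E} {s : Set ℝ} {t : ℝ}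
    (hs : IsOpen s) (ht : t ∈ s) (hF : ∀ τ ∈ s, Continuous (F τ))
    (hderiv : ∀ τ ∈ s, ∀ x, HasDerivAt (fun r => F r x) (F' τ x) τ)
    (hF' : ContinuousOn (uncurry F') (s ×ˢ univ)) :
    HasDerivAt (fun τ => ∫ x in a..b, F τ x) (∫ x in a..b, F' t x) t := by
  obtain ⟨k, hk, htk, hks⟩ := exists_compact_subset hs ht
  obtain ⟨B, hB⟩ := (hk.prod isCompact_uIcc).exists_bound_of_continuousOn
    (hF'.mono (prod_mono hks (subset_univ (uIcc a b))))
  have hF't : Continuous (F' t) :=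
    hF'.comp_continuous (Continuous.prodMk_right t) fun x => ⟨ht, mem_univ x⟩
  refine (intervalIntegral.hasDerivAt_integral_of_dominated_loc_of_deriv_le
    (bound := fun _ => B) (mem_interior_iff_mem_nhds.1 htk) ?_
    ((hF t ht).intervalIntegrable a b) hF't.aestronglyMeasurable
    (.of_forall fun x hx τ hτ => hB (τ, x) ⟨hτ, uIoc_subset_uIcc hx⟩) intervalIntegrable_const
    (.of_forall fun x _ τ hτ => hderiv τ (hks hτ) x)).2
  filter_upwards [hs.mem_nhds ht] with τ hτ using (hF τ hτ).aestronglyMeasurable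

theorem continuousOn_intervalIntegral {X : Type*} [TopologicalSpace X] {F : X → ℝ → E} {s : Set X}
    (hF : ContinuousOn (uncurry F) (s ×ˢ univ)) :
    ContinuousOn (fun p => ∫ x in a..b, F p x) s := by
  rw [continuousOn_iff_continuous_domRestrict]
  have hFs : Continuous (uncurry fun (p : s) x => F p x) :=
    hF.comp_continuous (f := fun q : s × ℝ => ((q.1 : X), q.2)) (by fun_prop)
      fun q => ⟨q.1.2, mem_univ q.2⟩
  exact intervalIntegral.continuous_parametric_intervalIntegral_of_continuous' hFs a b

theorem continuousOn_uncurry_comp_add {X Y : Type*} [TopologicalSpace X] [TopologicalSpace Y]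
    {F : X → ℝ → Y} {s : Set X} (hF : ContinuousOn (uncurry F) (s ×ˢ univ)) (ℓ : ℝ) :
    ContinuousOn (uncurry fun p x => F p (x + ℓ)) (s ×ˢ univ) :=
  hF.comp (f := fun q : X × ℝ => (q.1, q.2 + ℓ)) (by fun_prop) fun _ hq => ⟨hq.1, mem_univ _⟩

theorem continuousOn_uncurry_integral_comp_add {X : Type*} [TopologicalSpace X] {F : X → ℝ → E}
    {s : Set X} (hF : ContinuousOn (uncurry F) (s ×ˢ univ)) (ℓ : ℝ) :
    ContinuousOn (uncurry fun p x => ∫ r in (0 : ℝ)..ℓ, F p (x + r)) (s ×ˢ univ) :=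
  continuousOn_intervalIntegral (F := fun (q : X × ℝ) r => F q.1 (q.2 + r))
    (hF.comp (f := fun q : (X × ℝ) × ℝ => (q.1.1, q.1.2 + q.2)) (by fun_prop)
      fun _ hq => ⟨hq.1.1, mem_univ _⟩)

end IntervalIntegrals

section Periodic

variable {w : ℝ → ℝ} {L : ℝ}

theorem periodic_deriv {E : Type*} [NormedAddCommGroup E] [NormedSpace ℝ E] {g : ℝ → E}
    (hg : Periodic g L) : Periodic (deriv g) L := fun x => by
  rw [← deriv_comp_add_const, funext hg]

theorem exists_forall_le_of_periodic {X : Type*} [TopologicalSpace X] {s : Set X} {g : X → ℝ → ℝ}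
    (hL : 0 < L) (hs : IsCompact s) (hne : s.Nonempty)
    (hg : ContinuousOn (uncurry g) (s ×ˢ univ)) (hper : ∀ p ∈ s, Periodic (g p) L) :
    ∃ p ∈ s, ∃ x, ∀ q ∈ s, ∀ y, g q y ≤ g p x := by
  obtain ⟨⟨p, x⟩, hpx, hmax⟩ := (hs.prod isCompact_Icc).exists_isMaxOn
    (hne.prod (nonempty_Icc.2 hL.le)) (hg.mono (prod_mono Subset.rfl (subset_univ (Icc 0 L))))
  refine ⟨p, hpx.1, x, fun q hq y => ?_⟩
  obtain ⟨z, hz, hyz⟩ := (hper q hq).exists_mem_Ico₀ hL y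
  exact hyz ▸ hmax (a := (q, z)) ⟨hq, Ico_subset_Icc_self hz⟩

theorem integral_comp_add_of_periodic {E : Type*} [NormedAddCommGroup E] [NormedSpace ℝ E]
    {g : ℝ → E} (hg : Periodic g L) (ℓ : ℝ) :
    ∫ x in (0 : ℝ)..L, g (x + ℓ) = ∫ x in (0 : ℝ)..L, g x := by
  rw [intervalIntegral.integral_comp_add_right, zero_add, add_comm L ℓ,
    hg.intervalIntegral_add_eq ℓ 0, zero_add]

theorem integral_increment_eq_zero_of_periodic (hw : Continuous w) (hper : Periodic w L) (ℓ : ℝ) :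
    ∫ x in (0 : ℝ)..L, (w (x + ℓ) - w x) = 0 := by
  rw [intervalIntegral.integral_sub (Continuous.intervalIntegrable (by fun_prop) _ _)
    (hw.intervalIntegrable _ _), integral_comp_add_of_periodic hper, sub_self]

theorem integral_eq_zero_of_hasDerivAt_of_periodic {g g' : ℝ → ℝ}
    (hg : ∀ x, HasDerivAt g (g' x) x) (hg' : Continuous g') (hper : Periodic g L) :
    ∫ x in (0 : ℝ)..L, g' x = 0 := by
  rw [intervalIntegral.integral_eq_sub_of_hasDerivAt (fun x _ => hg x)
    (hg'.intervalIntegrable _ _), hper.eq, sub_self]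

theorem integral_integral_comp_add_eq_zero_of_periodic (hw : Continuous w) (hper : Periodic w L)
    (hmean : ∫ x in (0 : ℝ)..L, w x = 0) (ℓ : ℝ) :
    ∫ x in (0 : ℝ)..L, ∫ r in (0 : ℝ)..ℓ, w (x + r) = 0 := by
  have hcont : Continuous fun p : ℝ × ℝ => w (p.1 + p.2) := by fun_prop
  rw [intervalIntegral_intervalIntegral_swap]
  · simp only [integral_comp_add_of_periodic hper, hmean, intervalIntegral.integral_zero]
  · exact (hcont.continuousOn.integrableOn_compact
      (isCompact_uIcc.prod isCompact_uIcc)).mono_set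
        (prod_mono uIoc_subset_uIcc uIoc_subset_uIcc)

theorem hasDerivAt_integral_comp_add (hw : Continuous w) (ℓ x : ℝ) :
    HasDerivAt (fun y => ∫ r in (0 : ℝ)..ℓ, w (y + r)) (w (x + ℓ) - w x) x := by
  have hprim : (fun y => ∫ r in (0 : ℝ)..ℓ, w (y + r))
      = fun y => (∫ r in (0 : ℝ)..(y + ℓ), w r) - ∫ r in (0 : ℝ)..y, w r := by
    funext y
    rw [intervalIntegral.integral_comp_add_left, add_zero,
      intervalIntegral.integral_interval_sub_left (hw.intervalIntegrable _ _)
        (hw.intervalIntegrable _ _)]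
  rw [hprim]
  exact ((hw.integral_hasStrictDerivAt 0 (x + ℓ)).hasDerivAt.comp_add_const x ℓ).sub
    (hw.integral_hasStrictDerivAt 0 x).hasDerivAt

-- Integrate by parts once, using that `∫ r in 0..ℓ, w (x + r)` has `x`-derivative
-- `w (x + ℓ) - w x`.
theorem integral_correlation_identity {q q' : ℝ → ℝ} (hw : Continuous w)
    (hq : ∀ x, HasDerivAt q (q' x) x) (hq' : Continuous q') (hwper : Periodic w L)
    (hqper : Periodic q L) (ℓ : ℝ) :
    ∫ x in (0 : ℝ)..L, (q' x * (∫ r in (0 : ℝ)..ℓ, w (x + r)) + w x * (q (x + ℓ) - q x))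
      = ∫ x in (0 : ℝ)..L, (w x * q (x + ℓ) - q x * w (x + ℓ)) := by
  have hqc : Continuous q := continuous_iff_continuousAt.2 fun x => (hq x).continuousAt
  have hgper : Periodic (fun x => ∫ r in (0 : ℝ)..ℓ, w (x + r)) L := fun x => by
    simp only [add_right_comm x L, hwper _]
  have hparts : ∫ x in (0 : ℝ)..L,
      (q' x * (∫ r in (0 : ℝ)..ℓ, w (x + r)) + q x * (w (x + ℓ) - w x)) = 0 :=
    integral_eq_zero_of_hasDerivAt_of_periodic
      (fun x => (hq x).mul (hasDerivAt_integral_comp_add hw ℓ x)) (by fun_prop) (hqper.mul hgper)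
  refine sub_eq_zero.1 (.trans ?_ hparts)
  rw [← intervalIntegral.integral_sub (Continuous.intervalIntegrable (by fun_prop) _ _)
    (Continuous.intervalIntegrable (by fun_prop) _ _)]
  congr 1 with x
  ring

theorem abs_trapezoid_sub_integral_le {g : ℝ → ℝ} {K : NNReal} {a b : ℝ}
    (hg : LipschitzOnWith K g (uIcc a b)) :
    |(b - a) * (g a + g b) - 2 * ∫ y in a..b, g y| ≤ K * (b - a) ^ 2 := by
  have hint : IntervalIntegrable g volume a b := hg.continuousOn.intervalIntegrable
  have hsum : (b - a) * (g a + g b) - 2 * ∫ y in a..b, g y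
      = ∫ y in a..b, (g a + g b - 2 * g y) := by
    rw [intervalIntegral.integral_sub intervalIntegrable_const (hint.const_mul 2),
      intervalIntegral.integral_const, intervalIntegral.integral_const_mul, smul_eq_mul]
  have hpt : ∀ y ∈ uIoc a b, ‖g a + g b - 2 * g y‖ ≤ K * |b - a| := fun y hy => by
    have hy := uIoc_subset_uIcc hy
    have ha := hg.dist_le_mul a left_mem_uIcc y hy
    have hb := hg.dist_le_mul y hy b right_mem_uIcc
    have hdist : dist a y + dist y b = |b - a| := by
      rw [abs_sub_comm, ← Real.dist_eq]
      exact dist_add_dist_of_mem_segment (segment_eq_uIcc a b ▸ hy)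
    rw [dist_comm, Real.dist_eq] at hb
    rw [Real.dist_eq] at ha
    calc ‖g a + g b - 2 * g y‖ = |(g a - g y) + (g b - g y)| := by
          rw [Real.norm_eq_abs]; ring_nf
      _ ≤ K * dist a y + K * dist y b := (abs_add_le _ _).trans (add_le_add ha hb)
      _ = K * |b - a| := by rw [← mul_add, hdist]
  rw [hsum]
  calc |∫ y in a..b, (g a + g b - 2 * g y)| ≤ K * |b - a| * |b - a| :=
        intervalIntegral.norm_integral_le_of_norm_le_const hpt
    _ = K * (b - a) ^ 2 := by rw [mul_assoc, abs_mul_abs_self, sq]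

-- Subtracting the increments of `w * g w` and of a primitive of `g` at `w`, which have mean zero,
-- turns the integrand into the error of the trapezoidal rule for `g` between `w x` and `w (x + ℓ)`.
theorem abs_integral_flux_increment_le {g : ℝ → ℝ} {K : NNReal} {s : Set ℝ} (hL : 0 ≤ L)
    (hg : Continuous g) (hs : s.OrdConnected) (hK : LipschitzOnWith K g s) (hw : Continuous w)
    (hper : Periodic w L) (hws : ∀ x, w x ∈ s) (ℓ : ℝ) :
    |∫ x in (0 : ℝ)..L, (g (w x) * w (x + ℓ) - g (w (x + ℓ)) * w x)|
      ≤ K * ∫ x in (0 : ℝ)..L, (w (x + ℓ) - w x) ^ 2 := by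
  set G : ℝ → ℝ := fun y => ∫ z in (0 : ℝ)..y, g z
  have hG : Continuous G := intervalIntegral.continuous_primitive hg.intervalIntegrable 0
  have hwg := integral_increment_eq_zero_of_periodic (w := fun x => w x * g (w x)) (by fun_prop)
    (hper.mul (hper.comp g)) ℓ
  have hGw := integral_increment_eq_zero_of_periodic (w := fun x => G (w x)) (by fun_prop)
    (hper.comp G) ℓ
  have htrap : ∫ x in (0 : ℝ)..L, (g (w x) * w (x + ℓ) - g (w (x + ℓ)) * w x)
      = ∫ x in (0 : ℝ)..L, ((w (x + ℓ) - w x) * (g (w x) + g (w (x + ℓ)))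
          - 2 * (G (w (x + ℓ)) - G (w x))) := by
    rw [← sub_eq_zero, ← intervalIntegral.integral_sub
      (Continuous.intervalIntegrable (by fun_prop) _ _)
      (Continuous.intervalIntegrable (by fun_prop) _ _)]
    calc _ = ∫ x in (0 : ℝ)..L, (2 * (G (w (x + ℓ)) - G (w x))
          - (w (x + ℓ) * g (w (x + ℓ)) - w x * g (w x))) := by congr 1; ext x; ring
      _ = 0 := by
        rw [intervalIntegral.integral_sub (Continuous.intervalIntegrable (by fun_prop) _ _)
          (Continuous.intervalIntegrable (by fun_prop) _ _), intervalIntegral.integral_const_mul,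
          hwg, hGw, mul_zero, sub_zero]
  rw [htrap, ← intervalIntegral.integral_const_mul, ← Real.norm_eq_abs]
  refine intervalIntegral.norm_integral_le_of_norm_le hL (.of_forall fun x _ => ?_)
    (Continuous.intervalIntegrable (by fun_prop) _ _)
  rw [Real.norm_eq_abs, intervalIntegral.integral_interval_sub_left (hg.intervalIntegrable _ _)
    (hg.intervalIntegrable _ _)]
  exact abs_trapezoid_sub_integral_le (hK.mono (hs.uIcc_subset (hws x) (hws (x + ℓ))))

end Periodic

/-- Oleinik's one-sided Lipschitz condition: `w` increases at slope at most `M`, while it may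
decrease arbitrarily fast, as across a shock. -/
def OneSidedLipschitz (M : ℝ) (w : ℝ → ℝ) : Prop :=
  ∀ ⦃x y⦄, x ≤ y → w y - w x ≤ M * (y - x)

/-- The `p`-th absolute moment over one period `L` of the increments of `w` at distance `ℓ`, that
is, the structure function of `w` at a fixed time. -/
noncomputable def incrMoment (L p ℓ : ℝ) (w : ℝ → ℝ) : ℝ :=
  ∫ x in (0 : ℝ)..L, |w (x + ℓ) - w x| ^ p

/-- The correlation `∫ w(x) w(x + r) dx` over one period `L`, integrated over separations
`r ∈ [0, ℓ]`. -/
noncomputable def integratedCorrelation (L ℓ : ℝ) (w : ℝ → ℝ) : ℝ :=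
  ∫ x in (0 : ℝ)..L, w x * ∫ r in (0 : ℝ)..ℓ, w (x + r)

/-- The flux `q` of the generalised Burgers equation written as a conservation law `u_t = q_x`. -/
noncomputable def burgersFlux (f : ℝ → ℝ) (ν : ℝ) (w : ℝ → ℝ) (x : ℝ) : ℝ :=
  ν * deriv w x - f (w x)

theorem integral_mul_deriv_burgersFlux {f w q' : ℝ → ℝ} {ν L : ℝ} (hf : Continuous f)
    (hw : ContDiff ℝ 1 w) (hper : Periodic w L)
    (hq : ∀ x, HasDerivAt (burgersFlux f ν w) (q' x) x) (hq' : Continuous q') :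
    ∫ x in (0 : ℝ)..L, w x * q' x = -(ν * ∫ x in (0 : ℝ)..L, deriv w x ^ 2) := by
  have hwc := hw.continuous
  have : Continuous (deriv w) := hw.continuous_deriv le_rfl
  have hwd (x : ℝ) : HasDerivAt w (deriv w x) x :=
    (hw.differentiable one_ne_zero).differentiableAt.hasDerivAt
  have hqper : Periodic (burgersFlux f ν w) L := fun x => by
    simp only [burgersFlux, hper x, periodic_deriv hper x]
  have hqc : Continuous (burgersFlux f ν w) :=
    continuous_iff_continuousAt.2 fun x => (hq x).continuousAt
  have hparts : ∫ x in (0 : ℝ)..L, (deriv w x * burgersFlux f ν w x + w x * q' x) = 0 :=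
    integral_eq_zero_of_hasDerivAt_of_periodic (fun x => (hwd x).mul (hq x)) (by fun_prop)
      (hper.mul hqper)
  have htransport : ∫ x in (0 : ℝ)..L, f (w x) * deriv w x = 0 :=
    integral_eq_zero_of_hasDerivAt_of_periodic
      (fun x => (hf.integral_hasStrictDerivAt 0 (w x)).hasDerivAt.comp x (hwd x)) (by fun_prop)
      (hper.comp fun y => ∫ z in (0 : ℝ)..y, f z)
  have hsplit : ∫ x in (0 : ℝ)..L, w x * q' x
      = (∫ x in (0 : ℝ)..L, (deriv w x * burgersFlux f ν w x + w x * q' x))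
        - (ν * (∫ x in (0 : ℝ)..L, deriv w x ^ 2) - ∫ x in (0 : ℝ)..L, f (w x) * deriv w x) := by
    rw [← intervalIntegral.integral_const_mul,
      ← intervalIntegral.integral_sub (Continuous.intervalIntegrable (by fun_prop) _ _)
        (Continuous.intervalIntegrable (by fun_prop) _ _),
      ← intervalIntegral.integral_sub (Continuous.intervalIntegrable (by fun_prop) _ _)
        (Continuous.intervalIntegrable (by fun_prop) _ _)]
    congr 1 with x
    simp only [burgersFlux]
    ring
  rw [hsplit, hparts, htransport, sub_zero, zero_sub]

section IncrMoment

variable {w : ℝ → ℝ} {L p q r ℓ ε : ℝ}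

theorem incrMoment_two : incrMoment L 2 ℓ w = ∫ x in (0 : ℝ)..L, (w (x + ℓ) - w x) ^ 2 := by
  simp only [incrMoment, Real.rpow_two, sq_abs]

theorem continuous_rpow_abs_increment (hw : Continuous w) (hp : 0 ≤ p) :
    Continuous fun x => |w (x + ℓ) - w x| ^ p :=
  Continuous.rpow_const (by fun_prop) fun _ => .inr hp

theorem rpow_le_rpow_add_rpow {y : ℝ} (hy : 0 ≤ y) (hε : 0 < ε) (hr : 0 < r) (hrq : r ≤ q)
    (hqp : q ≤ p) : y ^ q ≤ ε ^ (q - r) * y ^ r + ε ^ (q - p) * y ^ p := by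
  rcases hy.eq_or_lt with rfl | hy
  · simp only [Real.zero_rpow hr.ne', Real.zero_rpow (hr.trans_le hrq).ne',
      Real.zero_rpow (hr.trans_le (hrq.trans hqp)).ne', mul_zero, add_zero, le_refl]
  have hsplit (z : ℝ) : y ^ q = y ^ (q - z) * y ^ z := by
    rw [← Real.rpow_add hy, sub_add_cancel]
  rcases le_total y ε with hle | hle
  · calc y ^ q ≤ ε ^ (q - r) * y ^ r := by
          rw [hsplit r]
          gcongr
      _ ≤ _ := le_add_of_nonneg_right (by positivity)
  · calc y ^ q ≤ ε ^ (q - p) * y ^ p := by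
          rw [hsplit p]
          exact mul_le_mul_of_nonneg_right
            (Real.rpow_le_rpow_of_nonpos hε hle (sub_nonpos.2 hqp)) (by positivity)
      _ ≤ _ := le_add_of_nonneg_left (by positivity)

theorem incrMoment_le_incrMoment_add_incrMoment (hL : 0 ≤ L) (hw : Continuous w) (hε : 0 < ε)
    (hr : 0 < r) (hrq : r ≤ q) (hqp : q ≤ p) :
    incrMoment L q ℓ w ≤ ε ^ (q - r) * incrMoment L r ℓ w + ε ^ (q - p) * incrMoment L p ℓ w := by
  have hint {z : ℝ} (hz : r ≤ z) :
      IntervalIntegrable (fun x => |w (x + ℓ) - w x| ^ z) volume 0 L :=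
    (continuous_rpow_abs_increment hw (hr.le.trans hz)).intervalIntegrable _ _
  unfold incrMoment
  rw [← intervalIntegral.integral_const_mul, ← intervalIntegral.integral_const_mul,
    ← intervalIntegral.integral_add ((hint le_rfl).const_mul _)
      ((hint (hrq.trans hqp)).const_mul _)]
  exact intervalIntegral.integral_mono_on hL (hint hrq)
    (((hint le_rfl).const_mul _).add ((hint (hrq.trans hqp)).const_mul _))
    fun x _ => rpow_le_rpow_add_rpow (abs_nonneg _) hε hr hrq hqp

end IncrMoment

theorem oneSidedLipschitz_of_deriv_le {w : ℝ → ℝ} {M : ℝ} (hw : Differentiable ℝ w)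
    (hM : ∀ x, deriv w x ≤ M) : OneSidedLipschitz M w :=
  fun _ _ hxy => image_sub_le_mul_sub_of_deriv_le hw hM hxy

namespace OneSidedLipschitz

variable {w : ℝ → ℝ} {M L ℓ : ℝ}

theorem mono {M' : ℝ} (h : OneSidedLipschitz M w) (hM : M ≤ M') : OneSidedLipschitz M' w :=
  fun _ _ hxy => (h hxy).trans (mul_le_mul_of_nonneg_right hM (sub_nonneg.2 hxy))

theorem neg_comp_neg (h : OneSidedLipschitz M w) : OneSidedLipschitz M fun x => -w (-x) :=
  fun x y hxy => by linarith [h (neg_le_neg hxy)]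

theorem nonneg_of_periodic (h : OneSidedLipschitz M w) (hL : 0 < L) (hper : Periodic w L) :
    0 ≤ M := by
  have hML := h hL.le
  rw [hper.eq, sub_self, sub_zero] at hML
  exact nonneg_of_mul_nonneg_left hML hL

theorem integral_comp_add_le (h : OneSidedLipschitz M w) (hw : Continuous w) (hℓ : 0 ≤ ℓ) (x : ℝ) :
    ∫ r in (0 : ℝ)..ℓ, w (x + r) ≤ ℓ * w x + M * ℓ ^ 2 / 2 :=
  calc ∫ r in (0 : ℝ)..ℓ, w (x + r)
      ≤ ∫ r in (0 : ℝ)..ℓ, (w x + M * r) := by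
        refine intervalIntegral.integral_mono_on hℓ
          (Continuous.intervalIntegrable (by fun_prop) _ _)
          (Continuous.intervalIntegrable (by fun_prop) _ _) fun r hr => ?_
        linarith [h (le_add_of_nonneg_right hr.1 : x ≤ x + r)]
    _ = ℓ * w x + M * ℓ ^ 2 / 2 := by
        rw [intervalIntegral.integral_add (Continuous.intervalIntegrable (by fun_prop) _ _)
          (Continuous.intervalIntegrable (by fun_prop) _ _), intervalIntegral.integral_const,
          intervalIntegral.integral_const_mul, integral_id, smul_eq_mul]
        ring

theorem neg_le_of_periodic (h : OneSidedLipschitz M w) (hL : 0 < L) (hw : Continuous w)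
    (hper : Periodic w L) (hmean : ∫ x in (0 : ℝ)..L, w x = 0) (x : ℝ) : -(M * L / 2) ≤ w x := by
  have hmean_shift : ∫ r in (0 : ℝ)..L, w (x + r) = 0 := by
    simpa only [add_comm x, hmean] using integral_comp_add_of_periodic hper x
  have hle := h.integral_comp_add_le hw hL.le x
  rw [hmean_shift] at hle
  have : 0 ≤ L * (w x + M * L / 2) := by linarith
  linarith [nonneg_of_mul_nonneg_right this hL]

theorem abs_le_of_periodic (h : OneSidedLipschitz M w) (hL : 0 < L) (hw : Continuous w)
    (hper : Periodic w L) (hmean : ∫ x in (0 : ℝ)..L, w x = 0) (x : ℝ) : |w x| ≤ M * L / 2 := by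
  have hper_neg : Periodic (fun x => -w (-x)) L := fun x => by
    simp only [neg_add, ← sub_eq_add_neg, hper.sub_eq]
  have hmean_neg : ∫ x in (0 : ℝ)..L, -w (-x) = 0 := by
    have := hper.intervalIntegral_add_eq (-L) 0
    rw [neg_add_cancel, zero_add, hmean] at this
    rw [intervalIntegral.integral_neg, intervalIntegral.integral_comp_neg, neg_zero, this, neg_zero]
  have hle := h.neg_comp_neg.neg_le_of_periodic hL (by fun_prop) hper_neg hmean_neg (-x)
  rw [neg_neg] at hle
  exact abs_le.2 ⟨h.neg_le_of_periodic hL hw hper hmean x, neg_le_neg_iff.1 hle⟩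

theorem integral_sq_le_of_periodic (h : OneSidedLipschitz M w) (hL : 0 < L) (hw : Continuous w)
    (hper : Periodic w L) (hmean : ∫ x in (0 : ℝ)..L, w x = 0) :
    ∫ x in (0 : ℝ)..L, w x ^ 2 ≤ L * (M * L / 2) ^ 2 :=
  calc ∫ x in (0 : ℝ)..L, w x ^ 2 ≤ ∫ x in (0 : ℝ)..L, (M * L / 2) ^ 2 :=
        intervalIntegral.integral_mono_on hL.le (Continuous.intervalIntegrable (by fun_prop) _ _)
          intervalIntegrable_const fun x _ =>
            sq_le_sq' (abs_le.1 (h.abs_le_of_periodic hL hw hper hmean x)).1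
              (abs_le.1 (h.abs_le_of_periodic hL hw hper hmean x)).2
    _ = L * (M * L / 2) ^ 2 := by
        rw [intervalIntegral.integral_const, smul_eq_mul, sub_zero]

theorem incrMoment_one_le (h : OneSidedLipschitz M w) (hL : 0 < L) (hw : Continuous w)
    (hper : Periodic w L) (hℓ : 0 ≤ ℓ) : incrMoment L 1 ℓ w ≤ 2 * (M * L) * ℓ := by
  have hM := h.nonneg_of_periodic hL hper
  have hle := integral_abs_le_of_integral_eq_zero (φ := fun x => w (x + ℓ) - w x) hL.le
    (Continuous.intervalIntegrable (by fun_prop) _ _) (mul_nonneg hM hℓ)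
    (fun x _ => by linarith [h (le_add_of_nonneg_right hℓ : x ≤ x + ℓ)])
    (integral_increment_eq_zero_of_periodic hw hper ℓ)
  simp only [incrMoment, Real.rpow_one]
  linarith

theorem incrMoment_le (h : OneSidedLipschitz M w) (hL : 0 < L) (hw : Continuous w)
    (hper : Periodic w L) (hmean : ∫ x in (0 : ℝ)..L, w x = 0) {p : ℝ} (hp : 1 ≤ p) (hℓ : 0 ≤ ℓ) :
    incrMoment L p ℓ w ≤ 2 * (M * L) ^ p * ℓ := by
  have hML : 0 ≤ M * L := mul_nonneg (h.nonneg_of_periodic hL hper) hL.le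
  have hsplit {y : ℝ} (hy : 0 ≤ y) : y ^ p = y ^ (p - 1) * y ^ (1 : ℝ) := by
    rw [← Real.rpow_add' hy (by linarith), sub_add_cancel]
  have hbound (x : ℝ) : |w (x + ℓ) - w x| ≤ M * L := by
    have hx := h.abs_le_of_periodic hL hw hper hmean x
    have hxℓ := h.abs_le_of_periodic hL hw hper hmean (x + ℓ)
    linarith [abs_sub (w (x + ℓ)) (w x)]
  calc incrMoment L p ℓ w
      ≤ ∫ x in (0 : ℝ)..L, (M * L) ^ (p - 1) * |w (x + ℓ) - w x| ^ (1 : ℝ) := by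
        refine intervalIntegral.integral_mono_on hL.le
          ((continuous_rpow_abs_increment hw (by linarith)).intervalIntegrable _ _)
          (((continuous_rpow_abs_increment hw zero_le_one).intervalIntegrable _ _).const_mul _)
          fun x _ => ?_
        rw [hsplit (abs_nonneg _)]
        gcongr
        exact hbound x
    _ = (M * L) ^ (p - 1) * incrMoment L 1 ℓ w := intervalIntegral.integral_const_mul _ _
    _ ≤ (M * L) ^ (p - 1) * (2 * (M * L) * ℓ) := by
        gcongr
        exact h.incrMoment_one_le hL hw hper hℓ
    _ = 2 * (M * L) ^ p * ℓ := by rw [hsplit hML, Real.rpow_one]; ring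

theorem abs_integratedCorrelation_sub_le (h : OneSidedLipschitz M w) (hL : 0 < L)
    (hw : Continuous w) (hper : Periodic w L) (hmean : ∫ x in (0 : ℝ)..L, w x = 0) (hℓ : 0 ≤ ℓ) :
    |integratedCorrelation L ℓ w - ℓ * ∫ x in (0 : ℝ)..L, w x ^ 2|
      ≤ M ^ 2 * L ^ 2 * ℓ ^ 2 / 2 := by
  have hM := h.nonneg_of_periodic hL hper
  set φ : ℝ → ℝ := fun x => (∫ r in (0 : ℝ)..ℓ, w (x + r)) - ℓ * w x with hφ
  have hφc : Continuous φ := by fun_prop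
  have hφ_mean : ∫ x in (0 : ℝ)..L, φ x = 0 := by
    rw [intervalIntegral.integral_sub (Continuous.intervalIntegrable (by fun_prop) _ _)
      (Continuous.intervalIntegrable (by fun_prop) _ _), intervalIntegral.integral_const_mul,
      integral_integral_comp_add_eq_zero_of_periodic hw hper hmean, hmean, mul_zero, sub_zero]
  have hφ_abs : ∫ x in (0 : ℝ)..L, |φ x| ≤ 2 * (M * ℓ ^ 2 / 2) * (L - 0) :=
    integral_abs_le_of_integral_eq_zero hL.le (hφc.intervalIntegrable _ _) (by positivity)
      (fun x _ => sub_le_iff_le_add'.2 (h.integral_comp_add_le hw hℓ x)) hφ_mean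
  have hdiff : integratedCorrelation L ℓ w - ℓ * ∫ x in (0 : ℝ)..L, w x ^ 2
      = ∫ x in (0 : ℝ)..L, w x * φ x := by
    rw [integratedCorrelation, ← intervalIntegral.integral_const_mul,
      ← intervalIntegral.integral_sub (Continuous.intervalIntegrable (by fun_prop) _ _)
        (Continuous.intervalIntegrable (by fun_prop) _ _)]
    congr 1 with x
    rw [hφ]
    ring
  rw [hdiff]
  calc |∫ x in (0 : ℝ)..L, w x * φ x|
      ≤ M * L / 2 * ∫ x in (0 : ℝ)..L, |φ x| :=
        abs_integral_mul_le hL.le (hφc.intervalIntegrable _ _)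
          (h.abs_le_of_periodic hL hw hper hmean)
    _ ≤ M * L / 2 * (2 * (M * ℓ ^ 2 / 2) * (L - 0)) := by gcongr
    _ = M ^ 2 * L ^ 2 * ℓ ^ 2 / 2 := by ring

theorem le_of_hasDerivAt {w' x : ℝ} (h : OneSidedLipschitz M w) (hw : HasDerivAt w w' x) :
    w' ≤ M := by
  have hanti : Antitone fun y => w y - M * y := fun y z hyz => by linarith [h hyz]
  have hderiv : HasDerivAt (fun y => w y - M * y) (w' - M * 1) x :=
    hw.sub ((hasDerivAt_id x).const_mul M)
  linarith [hderiv.deriv ▸ hanti.deriv_nonpos (x := x)]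

theorem abs_integral_mul_deriv_sub_le (h : OneSidedLipschitz M w) (hL : 0 < L)
    (hw : ContDiff ℝ 1 w) (hper : Periodic w L) (hmean : ∫ x in (0 : ℝ)..L, w x = 0) (ℓ : ℝ) :
    |∫ x in (0 : ℝ)..L, (w x * deriv w (x + ℓ) - deriv w x * w (x + ℓ))|
      ≤ 2 * M ^ 2 * L ^ 2 := by
  have hM := h.nonneg_of_periodic hL hper
  have hw' : Continuous (deriv w) := hw.continuous_deriv le_rfl
  have hwd (x : ℝ) : HasDerivAt w (deriv w x) x :=
    (hw.differentiable one_ne_zero).differentiableAt.hasDerivAt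
  have hwc := hw.continuous
  have hw'_abs : ∫ x in (0 : ℝ)..L, |deriv w x| ≤ 2 * M * (L - 0) :=
    integral_abs_le_of_integral_eq_zero hL.le (hw'.intervalIntegrable _ _) hM
      (fun x _ => h.le_of_hasDerivAt (hwd x))
      (integral_eq_zero_of_hasDerivAt_of_periodic hwd hw' hper)
  have hbound := h.abs_le_of_periodic hL hwc hper hmean
  have hleft := abs_integral_mul_le (ψ := fun x => deriv w (x + ℓ)) hL.le
    (Continuous.intervalIntegrable (by fun_prop) _ _) hbound
  have hright := abs_integral_mul_le (φ := fun x => w (x + ℓ)) hL.le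
    (hw'.intervalIntegrable _ _) fun x => hbound (x + ℓ)
  rw [integral_comp_add_of_periodic (g := fun x => |deriv w x|)
    fun x => congrArg abs (periodic_deriv hper x)] at hleft
  rw [intervalIntegral.integral_sub (Continuous.intervalIntegrable (by fun_prop) _ _)
    (Continuous.intervalIntegrable (by fun_prop) _ _)]
  simp only [mul_comm (deriv w _)]
  calc _ ≤ M * L / 2 * (∫ x in (0 : ℝ)..L, |deriv w x|)
        + M * L / 2 * ∫ x in (0 : ℝ)..L, |deriv w x| :=
        (abs_sub _ _).trans (add_le_add hleft hright)
    _ ≤ M * L / 2 * (2 * M * (L - 0)) + M * L / 2 * (2 * M * (L - 0)) := by gcongr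
    _ = 2 * M ^ 2 * L ^ 2 := by ring

theorem abs_integral_burgersFlux_le {f : ℝ → ℝ} {ν : ℝ} {K : NNReal} (h : OneSidedLipschitz M w)
    (hL : 0 < L) (hν : 0 ≤ ν) (hf : Continuous f)
    (hK : LipschitzOnWith K f (Icc (-(M * L / 2)) (M * L / 2))) (hw : ContDiff ℝ 1 w)
    (hper : Periodic w L) (hmean : ∫ x in (0 : ℝ)..L, w x = 0) (ℓ : ℝ) :
    |∫ x in (0 : ℝ)..L, (w x * burgersFlux f ν w (x + ℓ) - burgersFlux f ν w x * w (x + ℓ))|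
      ≤ K * incrMoment L 2 ℓ w + ν * (2 * M ^ 2 * L ^ 2) := by
  have hwc := hw.continuous
  have : Continuous (deriv w) := hw.continuous_deriv le_rfl
  have hinviscid := abs_integral_flux_increment_le hL.le hf ordConnected_Icc hK hwc hper
    (fun x => abs_le.1 (h.abs_le_of_periodic hL hwc hper hmean x)) ℓ
  have hviscous := h.abs_integral_mul_deriv_sub_le hL hw hper hmean ℓ
  have hsplit : ∫ x in (0 : ℝ)..L,
      (w x * burgersFlux f ν w (x + ℓ) - burgersFlux f ν w x * w (x + ℓ))
      = (∫ x in (0 : ℝ)..L, (f (w x) * w (x + ℓ) - f (w (x + ℓ)) * w x))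
        + ν * ∫ x in (0 : ℝ)..L, (w x * deriv w (x + ℓ) - deriv w x * w (x + ℓ)) := by
    rw [← intervalIntegral.integral_const_mul, ← intervalIntegral.integral_add
      (Continuous.intervalIntegrable (by fun_prop) _ _)
      (Continuous.intervalIntegrable (by fun_prop) _ _)]
    congr 1 with x
    simp only [burgersFlux]
    ring
  rw [hsplit, incrMoment_two]
  refine (abs_add_le _ _).trans (add_le_add hinviscid ?_)
  rw [abs_mul, abs_of_nonneg hν]
  exact mul_le_mul_of_nonneg_left hviscous hν

end OneSidedLipschitz

theorem forall_le_of_ae_le_of_periodic {g : ℝ → ℝ} {L B : ℝ} (hL : 0 < L) (hg : Continuous g)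
    (hper : Periodic g L) (hB : ∀ᵐ x ∂volume.restrict (Ioc 0 L), g x ≤ B) (x : ℝ) : g x ≤ B := by
  have hmax : (fun y => max (g y) B) =ᵐ[volume.restrict (Ioc 0 L)] fun _ => B := by
    filter_upwards [hB] with y hy using max_eq_right hy
  have hEqOn := Measure.eqOn_Ioc_of_ae_eq volume hmax (by fun_prop) (by fun_prop)
  obtain ⟨y, hy, hxy⟩ := hper.exists_mem_Ioc hL x 0
  rw [zero_add] at hy
  exact hxy ▸ max_eq_right_iff.1 (hEqOn hy)

section SobolevNorms

variable {m : ℕ} {p q : ℝ≥0∞} {v : ℝ → ℝ}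

theorem memLp_restrict_Ioc_of_continuous {g : ℝ → ℝ} {a b : ℝ} (hg : Continuous g) :
    MemLp g p (volume.restrict (Ioc a b)) := by
  obtain ⟨B, hB⟩ := (isCompact_Icc (a := a) (b := b)).exists_bound_of_continuousOn hg.continuousOn
  refine .of_bound hg.aestronglyMeasurable B ?_
  filter_upwards [ae_restrict_mem measurableSet_Ioc] with x hx using hB x (Ioc_subset_Icc_self hx)

theorem sobLp_mono_exponent (hv : Continuous (iteratedDeriv m v)) (hpq : p ≤ q) :
    sobLp m p v ≤ sobLp m q v := by
  have : IsProbabilityMeasure (volume.restrict (Ioc (0 : ℝ) 1)) := ⟨by simp⟩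
  exact ENNReal.toReal_mono (memLp_restrict_Ioc_of_continuous hv).eLpNorm_ne_top
    (eLpNorm_le_eLpNorm_of_exponent_le hpq hv.aestronglyMeasurable)

theorem sobLp_two_sq (hv : Continuous (iteratedDeriv m v)) :
    sobLp m 2 v ^ 2 = ∫ x in (0 : ℝ)..1, iteratedDeriv m v x ^ 2 := by
  have hnonneg : 0 ≤ ∫ x in Ioc (0 : ℝ) 1, iteratedDeriv m v x ^ 2 :=
    integral_nonneg fun x => sq_nonneg _
  rw [sobLp, (memLp_restrict_Ioc_of_continuous hv).eLpNorm_eq_integral_rpow_norm (by simp)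
    (by simp), intervalIntegral.integral_of_le zero_le_one]
  simp only [ENNReal.toReal_ofNat, Real.rpow_two, Real.norm_eq_abs, sq_abs]
  rw [ENNReal.toReal_ofReal (by positivity), ← Real.rpow_two,
    Real.rpow_inv_rpow hnonneg two_ne_zero]

theorem abs_iteratedDeriv_le_sobLp_top (hv : Continuous (iteratedDeriv m v))
    (hper : Periodic (iteratedDeriv m v) 1) (x : ℝ) : |iteratedDeriv m v x| ≤ sobLp m ⊤ v := by
  refine forall_le_of_ae_le_of_periodic (g := fun x => |iteratedDeriv m v x|) one_pos hv.abs
    (hper.comp abs) ?_ x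
  filter_upwards [ae_le_eLpNormEssSup (f := iteratedDeriv m v)] with y hy
  rw [← eLpNorm_exponent_top] at hy
  simpa only [sobLp, toReal_enorm, Real.norm_eq_abs] using
    ENNReal.toReal_mono (memLp_restrict_Ioc_of_continuous hv).eLpNorm_ne_top hy

theorem sobLp_pos (hp : p ≠ 0) (hv : Continuous (iteratedDeriv m v))
    (hper : Periodic (iteratedDeriv m v) 1) {x : ℝ} (hx : iteratedDeriv m v x ≠ 0) :
    0 < sobLp m p v := by
  refine ENNReal.toReal_pos (fun hzero => hx ?_)
    (memLp_restrict_Ioc_of_continuous hv).eLpNorm_ne_top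
  rw [eLpNorm_eq_zero_iff hv.aestronglyMeasurable hp] at hzero
  refine abs_nonpos_iff.1 (forall_le_of_ae_le_of_periodic (g := fun x => |iteratedDeriv m v x|)
    one_pos hv.abs (hper.comp abs) ?_ x)
  filter_upwards [hzero] with y hy using (abs_eq_zero.2 hy).le

end SobolevNorms

namespace IsBurgersSolution

variable {f : ℝ → ℝ} {σ ν : ℝ} {u : ℝ → ℝ → ℝ} {t : ℝ}

section Regularity

theorem contDiffOn_deriv (h : IsBurgersSolution f σ ν u) :
    ContDiffOn ℝ (⊤ : ℕ∞) (uncurry fun t x => deriv (u t) x) (Ici (0 : ℝ) ×ˢ univ) :=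
  contDiffOn_uncurry_deriv_right (uniqueDiffOn_Ici 0) h.hu le_rfl

theorem contDiff (h : IsBurgersSolution f σ ν u) (ht : 0 ≤ t) : ContDiff ℝ (⊤ : ℕ∞) (u t) :=
  contDiffOn_univ.1 (h.hu.comp (contDiff_prodMk_right t).contDiffOn fun _ hx => ⟨ht, hx⟩)

theorem continuous (h : IsBurgersSolution f σ ν u) (ht : 0 ≤ t) : Continuous (u t) :=
  (h.contDiff ht).continuous

theorem contDiff_deriv (h : IsBurgersSolution f σ ν u) (ht : 0 ≤ t) :
    ContDiff ℝ (⊤ : ℕ∞) (deriv (u t)) :=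
  contDiff_infty_iff_deriv.1 (h.contDiff ht) |>.2

theorem hasDerivAt (h : IsBurgersSolution f σ ν u) (ht : 0 ≤ t) (x : ℝ) :
    HasDerivAt (u t) (deriv (u t) x) x :=
  ((h.contDiff ht).differentiable (by simp)).differentiableAt.hasDerivAt

theorem hasDerivAt_deriv (h : IsBurgersSolution f σ ν u) (ht : 0 ≤ t) (x : ℝ) :
    HasDerivAt (deriv (u t)) (deriv (deriv (u t)) x) x :=
  ((h.contDiff_deriv ht).differentiable (by simp)).differentiableAt.hasDerivAt

theorem hasDerivAt_time (h : IsBurgersSolution f σ ν u) (ht : 0 < t) (x : ℝ) :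
    HasDerivAt (fun s => u s x) (deriv (fun s => u s x) t) t :=
  hasDerivAt_deriv_left_of_differentiableOn_uncurry (h.hu.differentiableOn (by simp))
    (Ici_mem_nhds ht) x

theorem periodic (h : IsBurgersSolution f σ ν u) (t : ℝ) : Periodic (u t) 1 := h.hper t

theorem integral_eq_zero (h : IsBurgersSolution f σ ν u) (ht : 0 ≤ t) :
    ∫ x in (0 : ℝ)..1, u t x = 0 := by
  rw [intervalIntegral.integral_of_le zero_le_one, h.hmean t ht]

theorem hasDerivAt_flux (h : IsBurgersSolution f σ ν u) (y : ℝ) : HasDerivAt f (deriv f y) y :=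
  (h.hf.differentiable (by simp)).differentiableAt.hasDerivAt

theorem periodic_burgersFlux (h : IsBurgersSolution f σ ν u) (t : ℝ) :
    Periodic (burgersFlux f ν (u t)) 1 := fun x => by
  rw [burgersFlux, burgersFlux, h.periodic t, periodic_deriv (h.periodic t)]

theorem hasDerivAt_burgersFlux (h : IsBurgersSolution f σ ν u) (ht : 0 < t) (x : ℝ) :
    HasDerivAt (burgersFlux f ν (u t)) (deriv (fun s => u s x) t) x := by
  have hflux := ((h.hasDerivAt_deriv ht.le x).const_mul ν).sub
    ((h.hasDerivAt_flux (u t x)).comp x (h.hasDerivAt ht.le x))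
  rwa [show ν * deriv (deriv (u t)) x - deriv f (u t x) * deriv (u t) x = deriv (fun s => u s x) t
    by linarith [h.hpde t ht x]] at hflux

theorem continuousOn_deriv_time (h : IsBurgersSolution f σ ν u) :
    ContinuousOn (uncurry fun t x => deriv (fun s => u s x) t) (Ioi (0 : ℝ) ×ˢ univ) :=
  (contDiffOn_uncurry_deriv_left (m := 0) isOpen_Ioi
    (h.hu.mono (prod_mono Ioi_subset_Ici_self Subset.rfl)) (by simp)).continuousOn

theorem continuous_deriv_time (h : IsBurgersSolution f σ ν u) (ht : 0 < t) :
    Continuous fun x => deriv (fun s => u s x) t :=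
  h.continuousOn_deriv_time.comp_continuous (Continuous.prodMk_right t) fun x => ⟨ht, mem_univ x⟩

end Regularity

section MaximumPrinciple

theorem deriv_deriv_time_le (h : IsBurgersSolution f σ ν u) (ht : 0 < t) {x : ℝ}
    (hmax : ∀ y, deriv (u t) y ≤ deriv (u t) x) :
    deriv (fun s => deriv (u s) x) t ≤ -(σ * deriv (u t) x ^ 2) := by
  have hmax' : IsLocalMax (deriv (u t)) x := .of_forall hmax
  have hux_diff : deriv (deriv (u t)) x = 0 := hmax'.deriv_eq_zero
  have huxx_nonpos : deriv (deriv (deriv (u t))) x ≤ 0 :=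
    deriv_deriv_nonpos_of_isLocalMax (h.hasDerivAt_deriv ht.le x).continuousAt hmax'
  have hf' : HasDerivAt (deriv f) (iteratedDeriv 2 f (u t x)) (u t x) := by
    rw [iteratedDeriv_succ, iteratedDeriv_one]
    exact ((contDiff_infty_iff_deriv.1 h.hf).2.differentiable (by simp)).differentiableAt.hasDerivAt
  have huxx : HasDerivAt (deriv (deriv (u t))) (deriv (deriv (deriv (u t))) x) x :=
    ((contDiff_infty_iff_deriv.1 (h.contDiff_deriv ht.le)).2.differentiable
      (by simp)).differentiableAt.hasDerivAt
  have hpde : (fun y => deriv (fun s => u s y) t)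
      = fun y => ν * deriv (deriv (u t)) y - deriv f (u t y) * deriv (u t) y := by
    funext y
    linarith [h.hpde t ht y]
  have hrhs : HasDerivAt (fun y => ν * deriv (deriv (u t)) y - deriv f (u t y) * deriv (u t) y)
      (ν * deriv (deriv (deriv (u t))) x
        - (iteratedDeriv 2 f (u t x) * deriv (u t) x * deriv (u t) x
          + deriv f (u t x) * deriv (deriv (u t)) x)) x :=
    (huxx.const_mul ν).sub
      ((hf'.comp x (h.hasDerivAt ht.le x)).mul (h.hasDerivAt_deriv ht.le x))
  have hnhds : Ici (0 : ℝ) ×ˢ univ ∈ 𝓝 (t, x) := prod_mem_nhds (Ici_mem_nhds ht) univ_mem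
  have hsmooth : ContDiffAt ℝ 2 (uncurry u) (t, x) :=
    (h.hu.contDiffAt hnhds).of_le (WithTop.coe_le_coe.2 (le_top (a := (2 : ℕ∞))))
  rw [deriv_deriv_comm hsmooth, hpde, hrhs.deriv, hux_diff]
  have hviscous := mul_nonpos_of_nonneg_of_nonpos h.hν.le huxx_nonpos
  have hconvex := mul_le_mul_of_nonneg_right (h.hconv (u t x)) (sq_nonneg (deriv (u t) x))
  linarith

-- At a positive-time maximum of `(1 + σMt) u_x`, the equation forces
-- `σ u_x (M - (1 + σMt) u_x) ≥ 0`.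
theorem deriv_le (h : IsBurgersSolution f σ ν u) {M : ℝ} (hM : 0 < M)
    (hinit : ∀ x, deriv (u 0) x ≤ M) (ht : 0 ≤ t) (x : ℝ) :
    deriv (u t) x ≤ M / (1 + σ * M * t) := by
  have hσ := h.hσ
  obtain ⟨τ, hτ, ξ, hmax⟩ := exists_forall_le_of_periodic (s := Icc 0 t)
    (g := fun s y => (1 + σ * M * s) * deriv (u s) y) one_pos isCompact_Icc (nonempty_Icc.2 ht)
    (ContinuousOn.mul (by fun_prop)
      (h.contDiffOn_deriv.continuousOn.mono (prod_mono Icc_subset_Ici_self Subset.rfl)))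
    fun s _ y => by simp only [periodic_deriv (h.periodic s) y]
  rw [le_div_iff₀' (by positivity)]
  refine (hmax t (right_mem_Icc.2 ht) x).trans ?_
  rcases hτ.1.eq_or_lt with rfl | hτ_pos
  · simpa only [mul_zero, add_zero, one_mul] using hinit ξ
  have hpos : 0 < 1 + σ * M * τ := by positivity
  have hslope : HasDerivAt (fun s => (1 + σ * M * s) * deriv (u s) ξ)
      (σ * M * deriv (u τ) ξ + (1 + σ * M * τ) * deriv (fun s => deriv (u s) ξ) τ) τ := by
    have hlin : HasDerivAt (fun s => 1 + σ * M * s) (σ * M) τ := by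
      simpa only [mul_one, id_eq] using ((hasDerivAt_id τ).const_mul (σ * M)).const_add 1
    exact hlin.mul (hasDerivAt_deriv_left_of_differentiableOn_uncurry
      (h.contDiffOn_deriv.differentiableOn (by simp)) (Ici_mem_nhds hτ_pos) ξ)
  have hslope_nonneg := deriv_nonneg_of_isMaxOn_Icc_right hτ_pos hslope.hasDerivWithinAt
    fun s hs => hmax s ⟨hs.1, hs.2.trans hτ.2⟩ ξ
  have hevol := h.deriv_deriv_time_le hτ_pos fun y => le_of_mul_le_mul_left (hmax τ hτ y) hpos
  by_contra! hlt
  have hux_pos : 0 < deriv (u τ) ξ := pos_of_mul_pos_right (hM.trans hlt) hpos.le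
  have hcontra : σ * deriv (u τ) ξ * M < σ * deriv (u τ) ξ * ((1 + σ * M * τ) * deriv (u τ) ξ) := by
    gcongr
  linarith [mul_le_mul_of_nonneg_left hevol hpos.le]

end MaximumPrinciple

section OneSidedBounds

theorem sobLp_zero_one_pos (h : IsBurgersSolution f σ ν u) : 0 < sobLp 0 1 (u 0) := by
  obtain ⟨x, hx⟩ := h.hinit
  exact sobLp_pos (x := x) one_ne_zero
    (by simpa only [iteratedDeriv_zero] using h.continuous le_rfl)
    (by simpa only [iteratedDeriv_zero] using h.periodic 0)
    (by simpa only [iteratedDeriv_zero] using hx)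

theorem burgersD_pos (h : IsBurgersSolution f σ ν u) : 0 < burgersD u :=
  lt_max_of_lt_left (inv_pos.2 h.sobLp_zero_one_pos)

theorem deriv_zero_le_burgersD (h : IsBurgersSolution f σ ν u) (x : ℝ) :
    deriv (u 0) x ≤ burgersD u := by
  have hle := abs_iteratedDeriv_le_sobLp_top (m := 1) (v := u 0)
    (by simpa only [iteratedDeriv_one] using (h.contDiff_deriv le_rfl).continuous)
    (by simpa only [iteratedDeriv_one] using periodic_deriv (h.periodic 0)) x
  rw [iteratedDeriv_one] at hle
  exact (le_abs_self _).trans (hle.trans (le_max_right _ _))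

theorem oneSidedLipschitz_div (h : IsBurgersSolution f σ ν u) (ht : 0 ≤ t) :
    OneSidedLipschitz (burgersD u / (1 + σ * burgersD u * t)) (u t) :=
  oneSidedLipschitz_of_deriv_le (fun x => (h.hasDerivAt ht x).differentiableAt)
    (h.deriv_le h.burgersD_pos h.deriv_zero_le_burgersD ht)

theorem oneSidedLipschitz_burgersD (h : IsBurgersSolution f σ ν u) (ht : 0 ≤ t) :
    OneSidedLipschitz (burgersD u) (u t) := by
  have hσ := h.hσ
  have hD := h.burgersD_pos
  exact (h.oneSidedLipschitz_div ht).mono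
    (div_le_self hD.le (le_add_of_nonneg_right (by positivity)))

theorem oneSidedLipschitz_inv (h : IsBurgersSolution f σ ν u) (ht : 0 < t) :
    OneSidedLipschitz (σ * t)⁻¹ (u t) := by
  have hσ := h.hσ
  have hD := h.burgersD_pos
  refine (h.oneSidedLipschitz_div ht.le).mono ?_
  rw [inv_eq_one_div, div_le_div_iff₀ (by positivity) (by positivity)]
  linarith

end OneSidedBounds

section Energy

theorem hasDerivAt_energy (h : IsBurgersSolution f σ ν u) (ht : 0 < t) :
    HasDerivAt (fun s => ∫ x in (0 : ℝ)..1, u s x ^ 2)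
      (-(2 * ν * ∫ x in (0 : ℝ)..1, deriv (u t) x ^ 2)) t := by
  have hcont : ContinuousOn (uncurry u) (Ioi (0 : ℝ) ×ˢ univ) :=
    h.hu.continuousOn.mono (prod_mono Ioi_subset_Ici_self Subset.rfl)
  have hbalance := integral_mul_deriv_burgersFlux h.hf.continuous
    ((h.contDiff ht.le).of_le (mod_cast le_top)) (h.periodic t) (h.hasDerivAt_burgersFlux ht)
    (h.continuous_deriv_time ht)
  have hderiv := hasDerivAt_intervalIntegral_of_continuousOn (a := 0) (b := 1) isOpen_Ioi ht
    (F := fun s x => u s x ^ 2) (F' := fun s x => 2 * (u s x * deriv (fun r => u r x) s))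
    (fun s hs => (h.continuous (le_of_lt hs)).pow 2)
    (fun s hs x => by simpa [mul_assoc] using (h.hasDerivAt_time hs x).fun_pow 2)
    (ContinuousOn.fun_mul continuousOn_const (hcont.fun_mul h.continuousOn_deriv_time))
  rw [intervalIntegral.integral_const_mul, hbalance] at hderiv
  exact hderiv.congr_deriv (by ring)

theorem continuousOn_energy (h : IsBurgersSolution f σ ν u) :
    ContinuousOn (fun s => ∫ x in (0 : ℝ)..1, u s x ^ 2) (Ici 0) :=
  continuousOn_intervalIntegral (h.hu.continuousOn.pow 2)

theorem energy_zero_sub_le {Ct T : ℝ} (h : IsBurgersSolution f σ ν u)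
    (hdiss : ∀ t, 0 ≤ t → sobLp 1 2 (u t) ^ 2 ≤ Ct * ν⁻¹) (hT : 0 ≤ T) :
    (∫ x in (0 : ℝ)..1, u 0 x ^ 2) - 2 * Ct * T ≤ ∫ x in (0 : ℝ)..1, u T x ^ 2 := by
  have hrate (t : ℝ) (ht : t ∈ interior (Ici (0 : ℝ))) :
      -(2 * Ct) ≤ deriv (fun s => ∫ x in (0 : ℝ)..1, u s x ^ 2) t := by
    rw [interior_Ici, mem_Ioi] at ht
    have hnorm := hdiss t ht.le
    rw [sobLp_two_sq (by simpa only [iteratedDeriv_one] using (h.contDiff_deriv ht.le).continuous),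
      iteratedDeriv_one, ← div_eq_mul_inv, le_div_iff₀' h.hν] at hnorm
    rw [(h.hasDerivAt_energy ht).deriv]
    linarith
  have hdrop := (convex_Ici (0 : ℝ)).mul_sub_le_image_sub_of_le_deriv h.continuousOn_energy
    (fun t ht => (h.hasDerivAt_energy
      (by rwa [interior_Ici] at ht)).differentiableAt.differentiableWithinAt)
    hrate 0 self_mem_Ici T hT hT
  linarith

theorem inv_sq_burgersD_le_energy_zero (h : IsBurgersSolution f σ ν u) :
    (burgersD u ^ 2)⁻¹ ≤ ∫ x in (0 : ℝ)..1, u 0 x ^ 2 := by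
  have hcont : Continuous (iteratedDeriv 0 (u 0)) := by
    simpa only [iteratedDeriv_zero] using h.continuous le_rfl
  have hD_inv : (burgersD u)⁻¹ ≤ sobLp 0 1 (u 0) :=
    inv_le_of_inv_le₀ h.sobLp_zero_one_pos (le_max_left _ _)
  calc (burgersD u ^ 2)⁻¹ = (burgersD u)⁻¹ ^ 2 := (inv_pow _ 2).symm
    _ ≤ sobLp 0 2 (u 0) ^ 2 :=
        pow_le_pow_left₀ (inv_nonneg.2 h.burgersD_pos.le)
          (hD_inv.trans (sobLp_mono_exponent hcont one_le_two)) 2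
    _ = ∫ x in (0 : ℝ)..1, u 0 x ^ 2 := by rw [sobLp_two_sq hcont, iteratedDeriv_zero]

end Energy

end IsBurgersSolution

section TimeAverage

variable {T₁ T₂ : ℝ} {A B : ℝ → ℝ}

theorem mul_timeAvg (hT : T₁ ≠ T₂) (A : ℝ → ℝ) :
    (T₂ - T₁) * timeAvg T₁ T₂ A = ∫ t in T₁..T₂, A t :=
  mul_inv_cancel_left₀ (sub_ne_zero.2 hT.symm) _

theorem timeAvg_const (hT : T₁ ≠ T₂) (c : ℝ) : timeAvg T₁ T₂ (fun _ => c) = c := by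
  rw [timeAvg, intervalIntegral.integral_const, smul_eq_mul,
    inv_mul_cancel_left₀ (sub_ne_zero.2 hT.symm)]

theorem timeAvg_mono (hT : T₁ < T₂) (hA : IntervalIntegrable A volume T₁ T₂)
    (hB : IntervalIntegrable B volume T₁ T₂) (hAB : ∀ t ∈ Icc T₁ T₂, A t ≤ B t) :
    timeAvg T₁ T₂ A ≤ timeAvg T₁ T₂ B :=
  mul_le_mul_of_nonneg_left (intervalIntegral.integral_mono_on hT.le hA hB hAB)
    (inv_nonneg.2 (sub_nonneg.2 hT.le))

theorem timeAvg_add (hA : IntervalIntegrable A volume T₁ T₂)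
    (hB : IntervalIntegrable B volume T₁ T₂) :
    timeAvg T₁ T₂ (fun t => A t + B t) = timeAvg T₁ T₂ A + timeAvg T₁ T₂ B := by
  rw [timeAvg, intervalIntegral.integral_add hA hB, mul_add, timeAvg, timeAvg]

theorem timeAvg_const_mul (c : ℝ) :
    timeAvg T₁ T₂ (fun t => c * A t) = c * timeAvg T₁ T₂ A := by
  rw [timeAvg, intervalIntegral.integral_const_mul, mul_left_comm, timeAvg]

theorem structFun_eq_timeAvg_incrMoment (u : ℝ → ℝ → ℝ) (p ℓ : ℝ) :
    structFun T₁ T₂ u p ℓ = timeAvg T₁ T₂ fun t => incrMoment 1 p ℓ (u t) := by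
  simp only [structFun, incrMoment, intervalIntegral.integral_of_le zero_le_one]

theorem burgersT₁_pos {D Ct : ℝ} (hD : 0 < D) (hCt : 0 < Ct) : 0 < burgersT₁ D Ct := by
  unfold burgersT₁
  positivity

theorem burgersT₁_lt_burgersT₂ {σ D Ct : ℝ} (hT₁ : 0 < burgersT₁ D Ct) :
    burgersT₁ D Ct < burgersT₂ σ D Ct :=
  (by linarith : burgersT₁ D Ct < 3 / 2 * burgersT₁ D Ct).trans_le (le_max_left _ _)

end TimeAverage

namespace IsBurgersSolution

variable {f : ℝ → ℝ} {σ ν : ℝ} {u : ℝ → ℝ → ℝ} {t : ℝ}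

section Correlation

theorem continuousOn_burgersFlux (h : IsBurgersSolution f σ ν u) :
    ContinuousOn (uncurry fun t => burgersFlux f ν (u t)) (Ici (0 : ℝ) ×ˢ univ) :=
  (ContinuousOn.fun_mul continuousOn_const h.contDiffOn_deriv.continuousOn).fun_sub
    (h.hf.continuous.comp_continuousOn h.hu.continuousOn)

theorem hasDerivAt_integral_comp_add_time (h : IsBurgersSolution f σ ν u) (ht : 0 < t)
    (ℓ x : ℝ) :
    HasDerivAt (fun s => ∫ r in (0 : ℝ)..ℓ, u s (x + r))
      (burgersFlux f ν (u t) (x + ℓ) - burgersFlux f ν (u t) x) t := by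
  have hderiv := hasDerivAt_intervalIntegral_of_continuousOn (a := x) (b := x + ℓ) isOpen_Ioi ht
    (fun s hs => h.continuous (le_of_lt hs)) (fun s hs => h.hasDerivAt_time hs)
    h.continuousOn_deriv_time
  rw [intervalIntegral.integral_eq_sub_of_hasDerivAt (fun y _ => h.hasDerivAt_burgersFlux ht y)
    ((h.continuous_deriv_time ht).intervalIntegrable _ _)] at hderiv
  simpa only [intervalIntegral.integral_comp_add_left, add_zero] using hderiv

theorem hasDerivAt_integratedCorrelation (h : IsBurgersSolution f σ ν u) (ht : 0 < t) (ℓ : ℝ) :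
    HasDerivAt (fun s => integratedCorrelation 1 ℓ (u s))
      (∫ x in (0 : ℝ)..1, (u t x * burgersFlux f ν (u t) (x + ℓ)
        - burgersFlux f ν (u t) x * u t (x + ℓ))) t := by
  have hu : ContinuousOn (uncurry u) (Ioi (0 : ℝ) ×ˢ univ) :=
    h.hu.continuousOn.mono (prod_mono Ioi_subset_Ici_self Subset.rfl)
  have hq : ContinuousOn (uncurry fun t => burgersFlux f ν (u t)) (Ioi (0 : ℝ) ×ˢ univ) :=
    h.continuousOn_burgersFlux.mono (prod_mono Ioi_subset_Ici_self Subset.rfl)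
  rw [← integral_correlation_identity (h.continuous ht.le) (h.hasDerivAt_burgersFlux ht)
    (h.continuous_deriv_time ht) (h.periodic t) (h.periodic_burgersFlux t) ℓ]
  refine hasDerivAt_intervalIntegral_of_continuousOn
    (F := fun s x => u s x * ∫ r in (0 : ℝ)..ℓ, u s (x + r)) isOpen_Ioi ht (fun s hs => ?_)
    (fun s hs x => (h.hasDerivAt_time hs x).mul (h.hasDerivAt_integral_comp_add_time hs ℓ x))
    ((h.continuousOn_deriv_time.fun_mul (continuousOn_uncurry_integral_comp_add hu ℓ)).fun_add
      (hu.fun_mul ((continuousOn_uncurry_comp_add hq ℓ).fun_sub hq)))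
  have := h.continuous (le_of_lt hs)
  fun_prop

end Correlation

section StructureFunction

variable {T₁ T₂ p q r ε ℓ : ℝ}

theorem continuousOn_incrMoment (h : IsBurgersSolution f σ ν u) (hp : 0 ≤ p) (ℓ : ℝ) :
    ContinuousOn (fun s => incrMoment 1 p ℓ (u s)) (Ici 0) :=
  continuousOn_intervalIntegral
    (((continuousOn_uncurry_comp_add h.hu.continuousOn ℓ).fun_sub h.hu.continuousOn).abs.rpow_const
      fun _ _ => .inr hp)

theorem intervalIntegrable_incrMoment (h : IsBurgersSolution f σ ν u) (hT₁ : 0 ≤ T₁)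
    (hT : T₁ ≤ T₂) (hp : 0 ≤ p) (ℓ : ℝ) :
    IntervalIntegrable (fun s => incrMoment 1 p ℓ (u s)) volume T₁ T₂ :=
  ((h.continuousOn_incrMoment hp ℓ).mono
    (Icc_subset_Ici_self.trans (Ici_subset_Ici.2 hT₁))).intervalIntegrable_of_Icc hT

theorem structFun_le (h : IsBurgersSolution f σ ν u) (hT₁ : 0 ≤ T₁) (hT : T₁ < T₂) (hp : 1 ≤ p)
    (hℓ : 0 ≤ ℓ) : structFun T₁ T₂ u p ℓ ≤ 2 * burgersD u ^ p * ℓ := by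
  rw [structFun_eq_timeAvg_incrMoment, ← timeAvg_const hT.ne (2 * burgersD u ^ p * ℓ)]
  refine timeAvg_mono hT (h.intervalIntegrable_incrMoment hT₁ hT.le (by linarith) ℓ)
    intervalIntegrable_const fun t ht => ?_
  have ht₀ : 0 ≤ t := hT₁.trans ht.1
  simpa only [mul_one] using (h.oneSidedLipschitz_burgersD ht₀).incrMoment_le one_pos
    (h.continuous ht₀) (h.periodic t) (h.integral_eq_zero ht₀) hp hℓ

theorem structFun_le_structFun_add_structFun (h : IsBurgersSolution f σ ν u) (hT₁ : 0 ≤ T₁)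
    (hT : T₁ < T₂) (hε : 0 < ε) (hr : 0 < r) (hrq : r ≤ q) (hqp : q ≤ p) :
    structFun T₁ T₂ u q ℓ
      ≤ ε ^ (q - r) * structFun T₁ T₂ u r ℓ + ε ^ (q - p) * structFun T₁ T₂ u p ℓ := by
  have hint {z : ℝ} (hz : r ≤ z) := h.intervalIntegrable_incrMoment hT₁ hT.le (hr.le.trans hz) ℓ
  have hint_r := (hint le_rfl).const_mul (ε ^ (q - r))
  have hint_p := (hint (hrq.trans hqp)).const_mul (ε ^ (q - p))
  simp only [structFun_eq_timeAvg_incrMoment]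
  rw [← timeAvg_const_mul, ← timeAvg_const_mul, ← timeAvg_add hint_r hint_p]
  exact timeAvg_mono hT (hint hrq) (hint_r.add hint_p) fun t ht =>
    incrMoment_le_incrMoment_add_incrMoment zero_le_one (h.continuous (hT₁.trans ht.1)) hε hr hrq
      hqp

theorem mul_energy_sub_le {K : NNReal} (h : IsBurgersSolution f σ ν u) (hT₁ : 0 < T₁)
    (hT : T₁ < T₂) (hK : LipschitzOnWith K f (Icc (-(burgersD u / 2)) (burgersD u / 2)))
    (hℓ : 0 ≤ ℓ) :
    ℓ * ((∫ x in (0 : ℝ)..1, u T₁ x ^ 2) - ∫ x in (0 : ℝ)..1, u T₂ x ^ 2)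
      ≤ (T₂ - T₁) * (K * structFun T₁ T₂ u 2 ℓ + ν * (2 * burgersD u ^ 2))
        + burgersD u ^ 2 * ℓ ^ 2 := by
  set D := burgersD u
  have hosl {t : ℝ} (ht : t ∈ Icc T₁ T₂) : OneSidedLipschitz D (u t) :=
    h.oneSidedLipschitz_burgersD (hT₁.le.trans ht.1)
  have hrate {t : ℝ} (ht : t ∈ Icc T₁ T₂) := (hosl ht).abs_integral_burgersFlux_le one_pos h.hν.le
    h.hf.continuous (by simpa only [mul_one] using hK)
    ((h.contDiff (hT₁.le.trans ht.1)).of_le (mod_cast le_top)) (h.periodic t)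
    (h.integral_eq_zero (hT₁.le.trans ht.1)) ℓ
  have happrox {t : ℝ} (ht : t ∈ Icc T₁ T₂) := abs_le.1 ((hosl ht).abs_integratedCorrelation_sub_le
    one_pos (h.continuous (hT₁.le.trans ht.1)) (h.periodic t)
    (h.integral_eq_zero (hT₁.le.trans ht.1)) hℓ)
  have hderiv {t : ℝ} (ht : t ∈ Icc T₁ T₂) :=
    (h.hasDerivAt_integratedCorrelation (hT₁.trans_le ht.1) ℓ).neg
  have hint := h.intervalIntegrable_incrMoment hT₁.le hT.le zero_le_two ℓ
  have hdrop : -integratedCorrelation 1 ℓ (u T₂) - -integratedCorrelation 1 ℓ (u T₁)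
      ≤ ∫ t in T₁..T₂, (K * incrMoment 1 2 ℓ (u t) + ν * (2 * D ^ 2 * 1 ^ 2)) :=
    intervalIntegral.sub_le_integral_of_hasDeriv_right_of_le hT.le
      (fun t ht => (hderiv ht).continuousAt.continuousWithinAt)
      (fun t ht => (hderiv (Ioo_subset_Icc_self ht)).hasDerivWithinAt)
      ((intervalIntegrable_iff_integrableOn_Icc_of_le hT.le).1
        ((hint.const_mul _).add intervalIntegrable_const))
      fun t ht => (neg_le_abs _).trans (hrate (Ioo_subset_Icc_self ht))
  rw [intervalIntegral.integral_add (hint.const_mul _) intervalIntegrable_const,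
    intervalIntegral.integral_const_mul, intervalIntegral.integral_const, smul_eq_mul,
    ← mul_timeAvg hT.ne, ← structFun_eq_timeAvg_incrMoment] at hdrop
  linarith [(happrox (left_mem_Icc.2 hT.le)).1, (happrox (right_mem_Icc.2 hT.le)).2]

end StructureFunction

section Bounds

variable {Ct ℓ p : ℝ}

-- Up to time `T₁` dissipation consumes at most half of the initial energy, while at time `T₂`
-- Oleinik's estimate bounds `|u|` by `1 / (4 D)`.
theorem le_energy_burgersT₁_sub_energy_burgersT₂ (h : IsBurgersSolution f σ ν u) (hCt : 0 < Ct)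
    (hdiss : ∀ t, 0 ≤ t → sobLp 1 2 (u t) ^ 2 ≤ Ct * ν⁻¹) :
    3 / 8 * (burgersD u ^ 2)⁻¹ ≤ (∫ x in (0 : ℝ)..1, u (burgersT₁ (burgersD u) Ct) x ^ 2)
      - ∫ x in (0 : ℝ)..1, u (burgersT₂ σ (burgersD u) Ct) x ^ 2 := by
  have hD := h.burgersD_pos
  have hD_inv := h.inv_sq_burgersD_le_energy_zero
  have hT₁ := burgersT₁_pos hD hCt
  set D := burgersD u
  have hT₂ : 0 < burgersT₂ σ D Ct := hT₁.trans (burgersT₁_lt_burgersT₂ hT₁)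
  have hearly := h.energy_zero_sub_le hdiss hT₁.le
  have hdissipated : 2 * Ct * burgersT₁ D Ct = (D ^ 2)⁻¹ / 2 := by
    unfold burgersT₁
    field_simp
    norm_num
  have hσT₂ : 2 * D ≤ σ * burgersT₂ σ D Ct := by
    have := le_max_right (3 / 2 * burgersT₁ D Ct) (2 * D * σ⁻¹)
    rwa [← div_eq_mul_inv, div_le_iff₀' h.hσ] at this
  have hlate := ((h.oneSidedLipschitz_inv hT₂).mono
    (inv_anti₀ (by positivity) hσT₂)).integral_sq_le_of_periodic one_pos (h.continuous hT₂.le)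
      (h.periodic _) (h.integral_eq_zero hT₂.le)
  have hlate_eq : (1 : ℝ) * ((2 * D)⁻¹ * 1 / 2) ^ 2 = (D ^ 2)⁻¹ / 16 := by
    field_simp
    norm_num
  have : 0 < (D ^ 2)⁻¹ := by positivity
  linarith

-- The two restrictions on `ℓ` make the viscous and the quadratic error of `mul_energy_sub_le` at
-- most `ℓ / (8 D²)` each, against a loss of at least `3 ℓ / (8 D²)` on the left.
theorem le_structFun_two {K : NNReal} (h : IsBurgersSolution f σ ν u) (hCt : 0 < Ct)
    (hdiss : ∀ t, 0 ≤ t → sobLp 1 2 (u t) ^ 2 ≤ Ct * ν⁻¹) (hK₀ : 0 < K)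
    (hK : LipschitzOnWith K f (Icc (-(burgersD u / 2)) (burgersD u / 2))) (hℓ : 0 ≤ ℓ)
    (hℓν : 16 * burgersD u ^ 4 * (burgersT₂ σ (burgersD u) Ct - burgersT₁ (burgersD u) Ct) * ν ≤ ℓ)
    (hℓD : ℓ ≤ (8 * burgersD u ^ 4)⁻¹) :
    (8 * K * burgersD u ^ 2
        * (burgersT₂ σ (burgersD u) Ct - burgersT₁ (burgersD u) Ct))⁻¹ * ℓ
      ≤ structFun (burgersT₁ (burgersD u) Ct) (burgersT₂ σ (burgersD u) Ct) u 2 ℓ := by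
  have hD := h.burgersD_pos
  have hT₁ := burgersT₁_pos hD hCt
  have hT := burgersT₁_lt_burgersT₂ (σ := σ) hT₁
  have hgap := h.le_energy_burgersT₁_sub_energy_burgersT₂ hCt hdiss
  have hbalance := h.mul_energy_sub_le hT₁ hT hK hℓ
  set D := burgersD u
  set Δ := burgersT₂ σ D Ct - burgersT₁ D Ct
  set S := structFun (burgersT₁ D Ct) (burgersT₂ σ D Ct) u 2 ℓ
  have : 0 < Δ := sub_pos.2 hT
  have : (0 : ℝ) < K := mod_cast hK₀
  have hloss : ℓ * (3 / 8 * (D ^ 2)⁻¹) ≤ Δ * (K * S + ν * (2 * D ^ 2)) + D ^ 2 * ℓ ^ 2 :=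
    (mul_le_mul_of_nonneg_left hgap hℓ).trans hbalance
  have hviscous : Δ * (ν * (2 * D ^ 2)) ≤ ℓ * (D ^ 2)⁻¹ / 8 := by
    rw [le_div_iff₀ (by norm_num), ← div_eq_mul_inv, le_div_iff₀ (by positivity)]
    linarith
  have hquadratic : D ^ 2 * ℓ ^ 2 ≤ ℓ * (D ^ 2)⁻¹ / 8 := by
    calc D ^ 2 * ℓ ^ 2 = D ^ 2 * ℓ * ℓ := by ring
      _ ≤ D ^ 2 * ℓ * (8 * D ^ 4)⁻¹ := by gcongr
      _ = ℓ * (D ^ 2)⁻¹ / 8 := by field_simp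
  have hmain : ℓ * (D ^ 2)⁻¹ / 8 ≤ Δ * (K * S) := by linarith
  rw [inv_mul_le_iff₀ (by positivity)]
  rw [div_le_iff₀ (by norm_num), ← div_eq_mul_inv, div_le_iff₀ (by positivity)] at hmain
  linarith

-- Interpolate `S₂` between `S₁ ≤ 2 D ℓ` and `S_p`, with `ε` so small that `S₁` contributes at most
-- half of the lower bound on `S₂`.
theorem le_structFun_of_le_structFun_two {T₁ T₂ a : ℝ} (h : IsBurgersSolution f σ ν u)
    (hT₁ : 0 ≤ T₁) (hT : T₁ < T₂) (ha : 0 < a) (hℓ : 0 ≤ ℓ)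
    (hS₂ : a * ℓ ≤ structFun T₁ T₂ u 2 ℓ) (hp : 2 ≤ p) :
    (a / (4 * burgersD u)) ^ (p - 2) * (a / 2) * ℓ ≤ structFun T₁ T₂ u p ℓ := by
  have hD := h.burgersD_pos
  have hS₁ := h.structFun_le hT₁ hT le_rfl hℓ
  rw [Real.rpow_one] at hS₁
  set D := burgersD u
  set ε := a / (4 * D) with hε_def
  have hε : 0 < ε := by positivity
  have hinterp := h.structFun_le_structFun_add_structFun (ℓ := ℓ) hT₁ hT hε one_pos one_le_two hp
  rw [show (2 : ℝ) - 1 = 1 by norm_num, Real.rpow_one, ← neg_sub p 2, Real.rpow_neg hε.le]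
    at hinterp
  have hεS₁ : ε * structFun T₁ T₂ u 1 ℓ ≤ a / 2 * ℓ :=
    calc ε * structFun T₁ T₂ u 1 ℓ ≤ ε * (2 * D * ℓ) := by gcongr
      _ = a / 2 * ℓ := by rw [hε_def]; field_simp; norm_num
  have hSp : a / 2 * ℓ ≤ (ε ^ (p - 2))⁻¹ * structFun T₁ T₂ u p ℓ := by linarith
  rwa [← div_eq_inv_mul, le_div_iff₀' (by positivity), ← mul_assoc] at hSp

end Bounds

end IsBurgersSolution

theorem exists_pos_lipschitzOnWith_Icc {f : ℝ → ℝ} (hf : ContDiff ℝ 1 f) (a b : ℝ) :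
    ∃ K : NNReal, 0 < K ∧ LipschitzOnWith K f (Icc a b) := by
  obtain ⟨K, hK⟩ := hf.contDiffOn.exists_lipschitzOnWith one_ne_zero (convex_Icc a b) isCompact_Icc
  exact ⟨max K 1, by positivity, hK.weaken (le_max_left K 1)⟩

theorem exists_inertial_range {A B : ℝ} (hA : 0 < A) (hB : 0 < B) :
    ∃ ν₀ C₂ : ℝ, (0 < ν₀ ∧ ν₀ ≤ 1) ∧ (A * ν₀ < C₂ ∧ C₂ < 1) ∧ C₂ ≤ B := by
  have hC₂ : 0 < min (1 / 2) B := by positivity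
  refine ⟨min 1 (min (1 / 2) B / (2 * A)), min (1 / 2) B, ⟨by positivity, min_le_left _ _⟩,
    ⟨?_, (min_le_left _ _).trans_lt (by norm_num)⟩, min_le_right _ _⟩
  calc A * min 1 (min (1 / 2) B / (2 * A)) ≤ A * (min (1 / 2) B / (2 * A)) := by
        gcongr
        exact min_le_right _ _
    _ = min (1 / 2) B / 2 := by field_simp
    _ < min (1 / 2) B := half_lt_self hC₂

theorem exists_structFun_bounds {f : ℝ → ℝ} {σ D Ct : ℝ} (hCt : 0 < Ct)
    (hCtb : ∀ ν, 0 < ν → ν ≤ 1 →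
      ∀ u : ℝ → ℝ → ℝ, IsBurgersSolution f σ ν u → burgersD u = D →
        ∀ t, 0 ≤ t → sobLp 1 2 (u t) ^ 2 ≤ Ct * ν⁻¹) :
    ∃ (ν₀ C₁ C₂ : ℝ) (c C : ℝ → ℝ), (0 < ν₀ ∧ ν₀ ≤ 1) ∧ 0 < C₁ ∧ (C₁ * ν₀ < C₂ ∧ C₂ < 1) ∧
      (∀ p, 0 < c p) ∧ (∀ p, 0 < C p) ∧
      ∀ ν, ν ≤ ν₀ → ∀ u : ℝ → ℝ → ℝ, IsBurgersSolution f σ ν u → burgersD u = D →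
        ∀ ℓ, C₁ * ν < ℓ → ℓ ≤ C₂ → 0 < ℓ ∧ ∀ p, 2 ≤ p →
          c p * ℓ ≤ structFun (burgersT₁ D Ct) (burgersT₂ σ D Ct) u p ℓ ∧
          structFun (burgersT₁ D Ct) (burgersT₂ σ D Ct) u p ℓ ≤ C p * ℓ := by
  by_cases hsol : ∃ ν u, IsBurgersSolution f σ ν u ∧ burgersD u = D
  · obtain ⟨_, v, hv, rfl⟩ := hsol
    set D := burgersD v
    have hD : 0 < D := hv.burgersD_pos
    have hT₁ : 0 < burgersT₁ D Ct := burgersT₁_pos hD hCt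
    have hT : burgersT₁ D Ct < burgersT₂ σ D Ct := burgersT₁_lt_burgersT₂ hT₁
    obtain ⟨K, hK₀, hK⟩ := exists_pos_lipschitzOnWith_Icc (hv.hf.of_le (mod_cast le_top))
      (-(D / 2)) (D / 2)
    set Δ := burgersT₂ σ D Ct - burgersT₁ D Ct
    have : 0 < Δ := sub_pos.2 hT
    set a : ℝ := (8 * K * D ^ 2 * Δ)⁻¹
    have ha : 0 < a := by positivity
    have hC₁ : 0 < 16 * D ^ 4 * Δ := by positivity
    obtain ⟨ν₀, C₂, hν₀, hC₂, hC₂D⟩ :=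
      exists_inertial_range hC₁ (B := (8 * D ^ 4)⁻¹) (by positivity)
    refine ⟨ν₀, 16 * D ^ 4 * Δ, C₂, fun p => (a / (4 * D)) ^ (p - 2) * (a / 2),
      fun p => 2 * D ^ p, hν₀, hC₁, hC₂, fun p => by positivity, fun p => by positivity,
      fun ν hν u h hu ℓ hℓν hℓC₂ => ?_⟩
    have hℓ : 0 < ℓ := (mul_pos hC₁ h.hν).trans hℓν
    have hS₂ := h.le_structFun_two hCt (hCtb ν h.hν (hν.trans hν₀.2) u h hu) hK₀ (hu ▸ hK) hℓ.le
      (hu ▸ hℓν.le) (hu ▸ hℓC₂.trans hC₂D)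
    rw [hu] at hS₂
    refine ⟨hℓ, fun p hp => ⟨?_, ?_⟩⟩
    · simpa only [hu] using h.le_structFun_of_le_structFun_two hT₁.le hT ha hℓ.le hS₂ hp
    · simpa only [hu] using h.structFun_le hT₁.le hT (one_le_two.trans hp) hℓ.le
  · exact ⟨1, 1 / 4, 1 / 2, 1, 1, by norm_num, by norm_num, by norm_num, fun _ => one_pos,
      fun _ => one_pos, fun ν _ u h hu => (hsol ⟨ν, u, h, hu⟩).elim⟩

/-- There exist `ν₀ ∈ (0,1]`, `C₁ > 0`, `C₂ ∈ (C₁ν₀,1)` and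
`c, C > 0` such that for every `ν ∈ (0,ν₀]` and every `ℓ` in the inertial range
`(C₁ν, C₂]`, the flatness `F(ℓ) = S₄(ℓ)/S₂(ℓ)²` satisfies
`c ℓ⁻¹ ≤ F(ℓ) ≤ C ℓ⁻¹`. -/
theorem statement19 (f : ℝ → ℝ) (σ D Ct : ℝ) (hCt : 0 < Ct)
    (hCtb : ∀ ν, 0 < ν → ν ≤ 1 →
      ∀ u : ℝ → ℝ → ℝ, IsBurgersSolution f σ ν u → burgersD u = D →
        ∀ t, 0 ≤ t → sobLp 1 2 (u t) ^ 2 ≤ Ct * ν⁻¹) :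
    ∃ ν₀ C₁ C₂ c C : ℝ, (0 < ν₀ ∧ ν₀ ≤ 1) ∧ 0 < C₁ ∧ (C₁ * ν₀ < C₂ ∧ C₂ < 1) ∧
      0 < c ∧ 0 < C ∧
      ∀ ν, 0 < ν → ν ≤ ν₀ →
        ∀ u : ℝ → ℝ → ℝ, IsBurgersSolution f σ ν u → burgersD u = D →
          ∀ ℓ, C₁ * ν < ℓ → ℓ ≤ C₂ →
            c * ℓ⁻¹
              ≤ structFun (burgersT₁ D Ct) (burgersT₂ σ D Ct) u 4 ℓ
                  / (structFun (burgersT₁ D Ct) (burgersT₂ σ D Ct) u 2 ℓ) ^ 2 ∧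
            structFun (burgersT₁ D Ct) (burgersT₂ σ D Ct) u 4 ℓ
                / (structFun (burgersT₁ D Ct) (burgersT₂ σ D Ct) u 2 ℓ) ^ 2
              ≤ C * ℓ⁻¹ := by
  obtain ⟨ν₀, C₁, C₂, c, C, hν₀, hC₁, hC₂, hc, hC, hS⟩ := exists_structFun_bounds hCt hCtb
  refine ⟨ν₀, C₁, C₂, c 4 / C 2 ^ 2, C 4 / c 2 ^ 2, hν₀, hC₁, hC₂,
    div_pos (hc 4) (pow_pos (hC 2) 2), div_pos (hC 4) (pow_pos (hc 2) 2),
    fun ν _ hνν₀ u h hu ℓ hℓν hℓC₂ => ?_⟩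
  obtain ⟨hℓ, hSp⟩ := hS ν hνν₀ u h hu ℓ hℓν hℓC₂
  obtain ⟨hS₂_lower, hS₂_upper⟩ := hSp 2 le_rfl
  obtain ⟨hS₄_lower, hS₄_upper⟩ := hSp 4 (by norm_num)
  have hc₂ := hc 2
  have hC₄ := hC 4
  have hS₂_pos := (mul_pos hc₂ hℓ).trans_le hS₂_lower
  have hS₄_pos := (mul_pos (hc 4) hℓ).trans_le hS₄_lower
  constructor
  · calc c 4 / C 2 ^ 2 * ℓ⁻¹ = c 4 * ℓ / (C 2 * ℓ) ^ 2 := by field_simp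
      _ ≤ _ := by gcongr
  · calc _ ≤ C 4 * ℓ / (c 2 * ℓ) ^ 2 := by gcongr
      _ = C 4 / c 2 ^ 2 * ℓ⁻¹ := by field_simp
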